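/- arXiv:1305.0687 — 13 statements merged into one kernel-verified Lean document; each statement's English description precedes it below -/
import Mathlib

section
/- Quasi-shuffle product formula for cyclotomic S-sums: let k, l ≥ 1, let a_1,…,a_k, c_1,…,c_k, d_1,…,d_l, f_1,…,f_l be positive integers, b_1,…,b_k, e_1,…,e_l nonnegative integers, x_1,…,x_k, y_1,…,y_l nonzero reals, and n ∈ ℕ. Set P = S_{(a_1,b_1,c_1),…,(a_k,b_k,c_k)}(x_1,…,x_k; n) · S_{(d_1,e_1,f_1),…,(d_l,e_l,f_l)}(y_1,…,y_l; n), Σ₁ = Σ_{i=1}^n (x_1^i/(a_1 i+b_1)^{c_1}) · S_{(a_2,b_2,c_2),…,(a_k,b_k,c_k)}(x_2,…,x_k; i) · S_{(d_1,e_1,f_1),…,(d_l,e_l,f_l)}(y_1,…,y_l; i), and Σ₂ = Σ_{i=1}^n (y_1^i/(d_1 i+e_1)^{f_1}) · S_{(a_1,b_1,c_1),…,(a_k,b_k,c_k)}(x_1,…,x_k; i) · S_{(d_2,e_2,f_2),…,(d_l,e_l,f_l)}(y_2,…,y_l; i). (1) If a_1 e_1 = d_1 b_1, then P = Σ₁ +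 Σ₂ − (a_1/d_1)^{f_1} · Σ_{i=1}^n ((x_1 y_1)^i/(a_1 i+b_1)^{c_1+f_1}) · S_{(a_2,b_2,c_2),…,(a_k,b_k,c_k)}(x_2,…,x_k; i) · S_{(d_2,e_2,f_2),…,(d_l,e_l,f_l)}(y_2,…,y_l; i). (2) If a_1 e_1 ≠ d_1 b_1, then P = Σ₁ + Σ₂ − Σ_{i=1}^n (x_1 y_1)^i · K(i) · S_{(a_2,b_2,c_2),…,(a_k,b_k,c_k)}(x_2,…,x_k; i) · S_{(d_2,e_2,f_2),…,(d_l,e_l,f_l)}(y_2,…,y_l; i), where K(i) = (−1)^{c_1} Σ_{j=1}^{c_1} (−1)^j · binom(c_1+f_1−j−1, f_1−1) · a_1^{f_1} d_1^{c_1−j} · (a_1 e_1 − d_1 b_1)^{−(c_1+f_1−j)} · (a_1 i + b_1)^{−j} + (−1)^{f_1} Σ_{j=1}^{f_1} (−1)^j · binom(c_1+f_1−j−1, c_1−1) · a_1^{f_1−j} d_1^{c_1} · (d_1 b_1 − a_1 e_1)^{−(c_1+f_1−j)} · (d_1 i + e_1)^{−j}. -/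
/-- Cyclotomic S-sums: `cycS [((a₁,b₁,c₁),x₁),…] n` is
`S_{(a₁,b₁,c₁),…}(x₁,…; n)`. The empty sum equals `1`. -/
noncomputable def cycS : List ((ℕ × ℤ × ℕ) × ℝ) → ℕ → ℝ
  | [], _ => 1
  | ((a, b, c), x) :: t, n =>
      ∑ i ∈ Finset.Icc 1 n, x ^ i / ((a : ℝ) * i + (b : ℝ)) ^ c * cycS t i

/-- One half of the partial fraction expansion. -/
noncomputable def pfHalf (r δ : ℝ) (c f : ℕ) : ℝ :=
  ∑ m ∈ Finset.range c, (-1 : ℝ) ^ m * (Nat.multichoose f m : ℝ) * δ ^ (f + m) * r ^ (c - m)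

lemma pfHalf_rec (r δ : ℝ) (c f : ℕ) :
    pfHalf r δ (c + 1) (f + 1) = δ * (pfHalf r δ (c + 1) f - pfHalf r δ c (f + 1)) := by
  unfold pfHalf
  rw [Finset.sum_range_succ', Finset.sum_range_succ' _ c]
  rw [add_sub_right_comm, ← Finset.sum_sub_distrib, mul_add, Finset.mul_sum]
  congr 1
  · apply Finset.sum_congr rfl
    intro m _
    rw [Nat.multichoose_succ_succ, Nat.add_sub_add_right]
    push_cast
    ring
  · simp
    ring

lemma pfHalf_zero_right (r δ : ℝ) (c : ℕ) : pfHalf r δ (c + 1) 0 = r ^ (c + 1) := by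
  unfold pfHalf
  rw [Finset.sum_range_succ']
  simp

lemma pfHalf_zero_left (r δ : ℝ) (f : ℕ) : pfHalf r δ 0 f = 0 := by
  simp [pfHalf]

lemma pf_main (r s δ : ℝ) (h : r * s = δ * (r - s)) : ∀ N c f : ℕ, c + f = N + 1 →
    r ^ c * s ^ f = pfHalf r δ c f + pfHalf s (-δ) f c := by
  intro N
  induction N with
  | zero =>
    intro c f hcf
    rcases c with _ | c
    · obtain rfl : f = 0 + 1 := by omega
      rw [pfHalf_zero_left, pfHalf_zero_right]; simp
    · obtain rfl : f = 0 := by omega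
      rw [pfHalf_zero_left, pfHalf_zero_right]; simp
  | succ N ih =>
    intro c f hcf
    rcases c with _ | c
    · obtain ⟨f, rfl⟩ : ∃ g, f = g + 1 := ⟨f - 1, by omega⟩
      rw [pfHalf_zero_left, pfHalf_zero_right]; simp
    rcases f with _ | f
    · rw [pfHalf_zero_left, pfHalf_zero_right]; simp
    have h1 := ih (c + 1) f (by omega)
    have h2 := ih c (f + 1) (by omega)
    rw [pfHalf_rec, pfHalf_rec]
    have : r ^ (c + 1) * s ^ (f + 1) = δ * (r ^ (c + 1) * s ^ f - r ^ c * s ^ (f + 1)) := by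
      have : r ^ (c + 1) * s ^ (f + 1) = r ^ c * s ^ f * (r * s) := by ring
      rw [this, h]; ring
    rw [this, h1, h2]
    ring

lemma half_eq (a d D u : ℝ) (hd : d ≠ 0) (c f : ℕ) (hf : 0 < f) :
    (-1 : ℝ) ^ c * (∑ j ∈ Finset.Icc 1 c, (-1 : ℝ) ^ j *
      (Nat.choose (c + f - j - 1) (f - 1) : ℝ) * a ^ f * d ^ (c - j) / D ^ (c + f - j) / u ^ j)
    = a ^ f * d ^ c * pfHalf (d * u)⁻¹ D⁻¹ c f := by
  unfold pfHalf
  rw [Finset.mul_sum, Finset.mul_sum]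
  refine Finset.sum_bij' (fun j _ => c - j) (fun m _ => c - m) ?_ ?_ ?_ ?_ ?_
  · intro j hj; simp at hj ⊢; omega
  · intro j hj; simp at hj ⊢; omega
  · intro j hj; simp at hj ⊢; omega
  · intro j hj; simp at hj ⊢; omega
  · intro j hj
    simp only [Finset.mem_Icc] at hj
    obtain ⟨m, rfl⟩ : ∃ m, c = j + m := ⟨c - j, by omega⟩
    have e1 : j + m - j = m := by omega
    have e2 : j + m - m = j := by omega
    have e3 : j + m + f - j = f + m := by omega
    have e4 : Nat.choose (f + m - 1) (f - 1) = Nat.multichoose f m := by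
      rw [Nat.multichoose_eq, ← Nat.choose_symm (n := f + m - 1) (k := m) (by omega)]
      congr 1; omega
    have e5 : (-1 : ℝ) ^ (j + m) * (-1) ^ j = (-1) ^ m := by
      rw [pow_add, mul_right_comm, ← mul_pow]; simp
    rw [e1, e2, e3, e4, mul_inv, mul_pow, pow_add d, ← e5]
    have : d ^ j * d⁻¹ ^ j = 1 := by rw [← mul_pow, mul_inv_cancel₀ hd, one_pow]
    simp only [div_eq_mul_inv, inv_pow] at this ⊢
    linear_combination (-(-1 : ℝ) ^ (j + m) * (-1) ^ j * a ^ f * d ^ m * (f.multichoose m : ℝ) *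
      (D ^ (f + m))⁻¹ * (u ^ j)⁻¹) * this

lemma sum_mul_sum_shuffle (g h : ℕ → ℝ) (n : ℕ) :
    (∑ i ∈ Finset.Icc 1 n, g i) * (∑ i ∈ Finset.Icc 1 n, h i) =
      (∑ i ∈ Finset.Icc 1 n, g i * ∑ k ∈ Finset.Icc 1 i, h k)
      + (∑ i ∈ Finset.Icc 1 n, h i * ∑ k ∈ Finset.Icc 1 i, g k)
      - ∑ i ∈ Finset.Icc 1 n, g i * h i := by
  induction n with
  | zero => simp
  | succ n ih =>
    simp only [Finset.sum_Icc_succ_top (Nat.le_add_left 1 n)]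
    linear_combination ih

lemma cycS_mul (a b c d e f : ℕ) (x y : ℝ) (t₁ t₂ : List ((ℕ × ℤ × ℕ) × ℝ)) (n : ℕ) :
    cycS (((a, (b : ℤ), c), x) :: t₁) n * cycS (((d, (e : ℤ), f), y) :: t₂) n =
        (∑ i ∈ Finset.Icc 1 n, x ^ i / ((a : ℝ) * i + (b : ℝ)) ^ c *
            cycS t₁ i * cycS (((d, (e : ℤ), f), y) :: t₂) i)
        + (∑ i ∈ Finset.Icc 1 n, y ^ i / ((d : ℝ) * i + (e : ℝ)) ^ f *
            cycS (((a, (b : ℤ), c), x) :: t₁) i * cycS t₂ i)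
        - ∑ i ∈ Finset.Icc 1 n, (x ^ i / ((a : ℝ) * i + (b : ℝ)) ^ c * cycS t₁ i) *
            (y ^ i / ((d : ℝ) * i + (e : ℝ)) ^ f * cycS t₂ i) := by
  simp only [cycS, Int.cast_natCast]
  rw [sum_mul_sum_shuffle]
  congr 2
  apply Finset.sum_congr rfl
  intro i _
  ring

/-- Quasi-shuffle product formula for cyclotomic S-sums. -/
theorem cycS_quasi_shuffle
    (a₁ c₁ d₁ f₁ b₁ e₁ : ℕ) (x₁ y₁ : ℝ)
    (t₁ t₂ : List ((ℕ × ℤ × ℕ) × ℝ)) (n : ℕ)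
    (ha₁ : 0 < a₁) (hc₁ : 0 < c₁) (hd₁ : 0 < d₁) (hf₁ : 0 < f₁)
    (hx₁ : x₁ ≠ 0) (hy₁ : y₁ ≠ 0)
    (ht₁ : ∀ p ∈ t₁, 0 < p.1.1 ∧ 0 ≤ p.1.2.1 ∧ 0 < p.1.2.2 ∧ p.2 ≠ 0)
    (ht₂ : ∀ p ∈ t₂, 0 < p.1.1 ∧ 0 ≤ p.1.2.1 ∧ 0 < p.1.2.2 ∧ p.2 ≠ 0) :
    (a₁ * e₁ = d₁ * b₁ →
      cycS (((a₁, (b₁ : ℤ), c₁), x₁) :: t₁) n * cycS (((d₁, (e₁ : ℤ), f₁), y₁) :: t₂) n =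
        (∑ i ∈ Finset.Icc 1 n, x₁ ^ i / ((a₁ : ℝ) * i + (b₁ : ℝ)) ^ c₁ *
            cycS t₁ i * cycS (((d₁, (e₁ : ℤ), f₁), y₁) :: t₂) i)
        + (∑ i ∈ Finset.Icc 1 n, y₁ ^ i / ((d₁ : ℝ) * i + (e₁ : ℝ)) ^ f₁ *
            cycS (((a₁, (b₁ : ℤ), c₁), x₁) :: t₁) i * cycS t₂ i)
        - ((a₁ : ℝ) / (d₁ : ℝ)) ^ f₁ *
            ∑ i ∈ Finset.Icc 1 n, (x₁ * y₁) ^ i / ((a₁ : ℝ) * i + (b₁ : ℝ)) ^ (c₁ + f₁) *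
              cycS t₁ i * cycS t₂ i) ∧
    (a₁ * e₁ ≠ d₁ * b₁ →
      cycS (((a₁, (b₁ : ℤ), c₁), x₁) :: t₁) n * cycS (((d₁, (e₁ : ℤ), f₁), y₁) :: t₂) n =
        (∑ i ∈ Finset.Icc 1 n, x₁ ^ i / ((a₁ : ℝ) * i + (b₁ : ℝ)) ^ c₁ *
            cycS t₁ i * cycS (((d₁, (e₁ : ℤ), f₁), y₁) :: t₂) i)
        + (∑ i ∈ Finset.Icc 1 n, y₁ ^ i / ((d₁ : ℝ) * i + (e₁ : ℝ)) ^ f₁ *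
            cycS (((a₁, (b₁ : ℤ), c₁), x₁) :: t₁) i * cycS t₂ i)
        - ∑ i ∈ Finset.Icc 1 n, (x₁ * y₁) ^ i *
            ((-1 : ℝ) ^ c₁ * (∑ j ∈ Finset.Icc 1 c₁, (-1 : ℝ) ^ j *
                (Nat.choose (c₁ + f₁ - j - 1) (f₁ - 1) : ℝ) *
                (a₁ : ℝ) ^ f₁ * (d₁ : ℝ) ^ (c₁ - j) /
                ((a₁ : ℝ) * (e₁ : ℝ) - (d₁ : ℝ) * (b₁ : ℝ)) ^ (c₁ + f₁ - j) /
                ((a₁ : ℝ) * i + (b₁ : ℝ)) ^ j)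
             + (-1 : ℝ) ^ f₁ * (∑ j ∈ Finset.Icc 1 f₁, (-1 : ℝ) ^ j *
                (Nat.choose (c₁ + f₁ - j - 1) (c₁ - 1) : ℝ) *
                (a₁ : ℝ) ^ (f₁ - j) * (d₁ : ℝ) ^ c₁ /
                ((d₁ : ℝ) * (b₁ : ℝ) - (a₁ : ℝ) * (e₁ : ℝ)) ^ (c₁ + f₁ - j) /
                ((d₁ : ℝ) * i + (e₁ : ℝ)) ^ j)) *
            cycS t₁ i * cycS t₂ i) := by
  have ha : (a₁ : ℝ) ≠ 0 := by positivity
  have hd : (d₁ : ℝ) ≠ 0 := by positivity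
  constructor
  · intro h
    rw [cycS_mul, Finset.mul_sum]
    congr 1
    apply Finset.sum_congr rfl
    intro i hi
    have hi1 : 0 < i := by simp at hi; omega
    have hu : (a₁ : ℝ) * i + b₁ ≠ 0 := by positivity
    have hR : (a₁ : ℝ) * e₁ = d₁ * b₁ := by exact_mod_cast h
    have hv : (d₁ : ℝ) * i + e₁ = d₁ / a₁ * (a₁ * i + b₁) := by
      field_simp
      linear_combination hR
    rw [hv]
    generalize (a₁ : ℝ) * i + b₁ = u at *
    rw [mul_pow, mul_pow, div_pow, div_pow, pow_add]
    field_simp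
  · intro h
    rw [cycS_mul]
    congr 1
    apply Finset.sum_congr rfl
    intro i hi
    have hi1 : 0 < i := by simp at hi; omega
    have hu : (a₁ : ℝ) * i + b₁ ≠ 0 := by positivity
    have hv : (d₁ : ℝ) * i + e₁ ≠ 0 := by positivity
    have hR : (a₁ : ℝ) * e₁ - d₁ * b₁ ≠ 0 := by
      rw [sub_ne_zero]; exact_mod_cast h
    have hD : (a₁ : ℝ) * e₁ - d₁ * b₁ = a₁ * (d₁ * i + e₁) - d₁ * (a₁ * i + b₁) := by ring
    have hD' : (d₁ : ℝ) * b₁ - a₁ * e₁ = -(a₁ * e₁ - d₁ * b₁) := by ring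
    have k2 := half_eq d₁ a₁ (d₁ * b₁ - a₁ * e₁) (d₁ * i + e₁) ha f₁ c₁ hc₁
    have k2' : (-1 : ℝ) ^ f₁ * (∑ j ∈ Finset.Icc 1 f₁, (-1 : ℝ) ^ j *
                (Nat.choose (c₁ + f₁ - j - 1) (c₁ - 1) : ℝ) *
                (a₁ : ℝ) ^ (f₁ - j) * (d₁ : ℝ) ^ c₁ /
                ((d₁ : ℝ) * (b₁ : ℝ) - (a₁ : ℝ) * (e₁ : ℝ)) ^ (c₁ + f₁ - j) /
                ((d₁ : ℝ) * i + (e₁ : ℝ)) ^ j) =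
        (d₁ : ℝ) ^ c₁ * a₁ ^ f₁ * pfHalf ((a₁ : ℝ) * (d₁ * i + e₁))⁻¹
          ((d₁ : ℝ) * b₁ - a₁ * e₁)⁻¹ f₁ c₁ := by
      rw [← k2]
      congr 1
      apply Finset.sum_congr rfl
      intro j _
      rw [add_comm f₁ c₁]
      ring
    rw [half_eq _ _ _ _ hd _ _ hf₁, k2', hD', inv_neg]
    have key := pf_main ((d₁ : ℝ) * (a₁ * i + b₁))⁻¹ ((a₁ : ℝ) * (d₁ * i + e₁))⁻¹
      ((a₁ : ℝ) * e₁ - d₁ * b₁)⁻¹ (by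
        rw [eq_inv_mul_iff_mul_eq₀ hR, hD]
        generalize (a₁ : ℝ) * i + b₁ = u at *
        generalize (d₁ : ℝ) * i + e₁ = v at *
        field_simp) (c₁ + f₁ - 1) c₁ f₁ (by omega)
    have : ∀ p q : ℝ, (a₁ : ℝ) ^ f₁ * d₁ ^ c₁ * p + d₁ ^ c₁ * a₁ ^ f₁ * q =
      (a₁ : ℝ) ^ f₁ * d₁ ^ c₁ * (p + q) := by intros; ring
    rw [this, ← key]
    generalize (a₁ : ℝ) * i + b₁ = u at *
    generalize (d₁ : ℝ) * i + e₁ = v at *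
    rw [inv_pow, inv_pow, mul_pow, mul_pow, mul_pow]
    field_simp
end

section
/- Shifted partial fraction decomposition: let a_1, a_2, c_1, c_2 be positive integers, b_1, b_2 nonnegative integers, and i_1, i_2 integers with i_1 > i_2 ≥ 1. Then 1/((a_1(i_1−i_2)+b_1)^{c_1} (a_2 i_2 + b_2)^{c_2}) = Σ_{j=1}^{c_1} binom(c_1+c_2−j−1, c_2−1) · a_1^{c_2} a_2^{c_1−j} · (a_1 b_2 + a_2 b_1 + i_1 a_1 a_2)^{−(c_1+c_2−j)} · (a_1(i_1−i_2)+b_1)^{−j} + Σ_{j=1}^{c_2} binom(c_1+c_2−j−1, c_1−1) · a_1^{c_2−j} a_2^{c_1} · (a_1 b_2 + a_2 b_1 + i_1 a_1 a_2)^{−(c_1+c_2−j)} · (a_2 i_2 + b_2)^{−j}. -/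
lemma aux_pascal (p q : ℝ) (h : p + q = 1) (n m : ℕ) :
    q * ∑ k ∈ Finset.range (m + 1), ((n + 1 + k).choose (n + 1) : ℝ) * p ^ k =
      ∑ k ∈ Finset.range (m + 1), ((n + k).choose n : ℝ) * p ^ k
        - ((n + 1 + m).choose (n + 1) : ℝ) * p ^ (m + 1) := by
  have hq : q = 1 - p := by linarith
  subst hq
  induction m with
  | zero => simp
  | succ m ih =>
    rw [Finset.sum_range_succ, mul_add, ih, Finset.sum_range_succ _ (m + 1)]
    have : ((n + 1 + (m + 1)).choose (n + 1) : ℝ)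
        = ((n + (m + 1)).choose n : ℝ) + ((n + 1 + m).choose (n + 1) : ℝ) := by
      rw [show n + 1 + (m + 1) = (n + (m + 1)) + 1 by ring, Nat.choose_succ_succ,
        show n + 1 + m = n + (m + 1) by ring]
      push_cast; rfl
    rw [this]; ring

lemma aux_one (p q : ℝ) (h : p + q = 1) (m n : ℕ) :
    ∑ k ∈ Finset.range (m + 1), ((n + k).choose n : ℝ) * q ^ (n + 1) * p ^ k
      + ∑ k ∈ Finset.range (n + 1), ((m + k).choose m : ℝ) * p ^ (m + 1) * q ^ k = 1 := by
  have key : ∀ n : ℕ, q ^ (n + 1) * ∑ k ∈ Finset.range (m + 1), ((n + k).choose n : ℝ) * p ^ k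
      + ∑ k ∈ Finset.range (n + 1), ((m + k).choose m : ℝ) * p ^ (m + 1) * q ^ k = 1 := by
    intro n
    induction n with
    | zero =>
      have := mul_neg_geom_sum p (m + 1)
      have hq : q = 1 - p := by linarith
      subst hq
      simp only [zero_add, pow_one, Nat.choose_zero_right, Nat.cast_one, one_mul,
        Finset.sum_range_one, add_zero, Nat.choose_self, pow_zero, mul_one]
      linarith
    | succ n ih =>
      rw [Finset.sum_range_succ _ (n + 1), pow_succ, mul_assoc, aux_pascal p q h n m]
      have : ((n + 1 + m).choose (n + 1) : ℝ) = ((m + (n + 1)).choose m : ℝ) := by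
        rw [add_comm (n + 1) m, Nat.choose_symm_add]
      rw [this]
      linarith
  rw [← key n, Finset.mul_sum]
  congr 1
  exact Finset.sum_congr rfl fun k _ => by ring

lemma aux_sum (a b x y N : ℝ) (hx : x ≠ 0) (hy : y ≠ 0) (hN : N ≠ 0) (m n : ℕ) :
    ∑ j ∈ Finset.Icc 1 (m + 1), (Nat.choose ((m + 1) + (n + 1) - j - 1) n : ℝ) *
        a ^ (n + 1) * b ^ ((m + 1) - j) / N ^ ((m + 1) + (n + 1) - j) / x ^ j =
      (∑ k ∈ Finset.range (m + 1), ((n + k).choose n : ℝ) * (a * y / N) ^ (n + 1)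
        * (b * x / N) ^ k) / (x ^ (m + 1) * y ^ (n + 1)) := by
  rw [Finset.sum_div]
  refine Finset.sum_bij' (fun j _ => m + 1 - j) (fun k _ => m + 1 - k) ?_ ?_ ?_ ?_ ?_
  · intro j hj; simp at hj ⊢; omega
  · intro j hj; simp at hj ⊢; omega
  · intro j hj; simp at hj ⊢; omega
  · intro j hj; simp at hj ⊢; omega
  · intro j hj
    simp at hj
    obtain ⟨k, hk⟩ := Nat.exists_eq_add_of_le hj.2
    have e1 : m + 1 - j = k := by omega
    have e2 : m + 1 + (n + 1) - j - 1 = n + k := by omega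
    have e3 : m + 1 + (n + 1) - j = k + (n + 1) := by omega
    rw [e2, e3]
    simp only [e1]
    rw [hk]
    simp only [div_pow, mul_pow, pow_add]
    field_simp


/-- Shifted partial fraction decomposition of
`1/((a₁(i₁−i₂)+b₁)^{c₁} (a₂ i₂ + b₂)^{c₂})`. -/
theorem shifted_partial_fraction_decomposition
    (a₁ a₂ c₁ c₂ b₁ b₂ : ℕ) (i₁ i₂ : ℤ)
    (ha₁ : 0 < a₁) (ha₂ : 0 < a₂) (hc₁ : 0 < c₁) (hc₂ : 0 < c₂)
    (hi₂ : 1 ≤ i₂) (hi : i₂ < i₁) :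
    1 / (((a₁ : ℝ) * ((i₁ : ℝ) - (i₂ : ℝ)) + (b₁ : ℝ)) ^ c₁ *
          ((a₂ : ℝ) * (i₂ : ℝ) + (b₂ : ℝ)) ^ c₂) =
      (∑ j ∈ Finset.Icc 1 c₁, (Nat.choose (c₁ + c₂ - j - 1) (c₂ - 1) : ℝ) *
          (a₁ : ℝ) ^ c₂ * (a₂ : ℝ) ^ (c₁ - j) /
          ((a₁ : ℝ) * (b₂ : ℝ) + (a₂ : ℝ) * (b₁ : ℝ) +
              (i₁ : ℝ) * (a₁ : ℝ) * (a₂ : ℝ)) ^ (c₁ + c₂ - j) /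
          ((a₁ : ℝ) * ((i₁ : ℝ) - (i₂ : ℝ)) + (b₁ : ℝ)) ^ j)
      + ∑ j ∈ Finset.Icc 1 c₂, (Nat.choose (c₁ + c₂ - j - 1) (c₁ - 1) : ℝ) *
          (a₁ : ℝ) ^ (c₂ - j) * (a₂ : ℝ) ^ c₁ /
          ((a₁ : ℝ) * (b₂ : ℝ) + (a₂ : ℝ) * (b₁ : ℝ) +
              (i₁ : ℝ) * (a₁ : ℝ) * (a₂ : ℝ)) ^ (c₁ + c₂ - j) /
          ((a₂ : ℝ) * (i₂ : ℝ) + (b₂ : ℝ)) ^ j := by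

  have h1 : (1 : ℝ) ≤ i₂ := by exact_mod_cast hi₂
  have h2 : (0 : ℝ) < (i₁ : ℝ) - i₂ := by
    have : (i₂ : ℝ) < i₁ := by exact_mod_cast hi
    linarith
  have g1 : (0 : ℝ) < a₁ := by exact_mod_cast ha₁
  have g2 : (0 : ℝ) < a₂ := by exact_mod_cast ha₂
  have hx : 0 < (a₁ : ℝ) * ((i₁ : ℝ) - (i₂ : ℝ)) + (b₁ : ℝ) := by positivity
  have hy : 0 < (a₂ : ℝ) * (i₂ : ℝ) + (b₂ : ℝ) := by positivity
  have hNe : (a₁ : ℝ) * (b₂ : ℝ) + (a₂ : ℝ) * (b₁ : ℝ) + (i₁ : ℝ) * (a₁ : ℝ) * (a₂ : ℝ)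
      = a₂ * ((a₁ : ℝ) * ((i₁ : ℝ) - (i₂ : ℝ)) + (b₁ : ℝ))
        + a₁ * ((a₂ : ℝ) * (i₂ : ℝ) + (b₂ : ℝ)) := by ring
  rw [hNe]
  generalize (a₁ : ℝ) * ((i₁ : ℝ) - (i₂ : ℝ)) + (b₁ : ℝ) = x at *
  generalize (a₂ : ℝ) * (i₂ : ℝ) + (b₂ : ℝ) = y at *
  have hN : 0 < (a₂ : ℝ) * x + a₁ * y := by positivity
  obtain ⟨m, rfl⟩ : ∃ m, c₁ = m + 1 := ⟨c₁ - 1, by omega⟩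
  obtain ⟨n, rfl⟩ : ∃ n, c₂ = n + 1 := ⟨c₂ - 1, by omega⟩
  have s1 := aux_sum a₁ a₂ x y _ hx.ne' hy.ne' hN.ne' m n
  have s2 := aux_sum a₂ a₁ y x _ hy.ne' hx.ne' hN.ne' n m
  have s3 := aux_one (a₂ * x / (a₂ * x + a₁ * y)) (a₁ * y / (a₂ * x + a₁ * y))
    (by field_simp) m n
  simp only [Nat.add_sub_cancel]
  rw [s1, ← s3, add_div, mul_comm (x ^ (m + 1))]
  congr 1
  rw [← s2]
  refine Finset.sum_congr rfl fun j _ => ?_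
  rw [add_comm (n + 1) (m + 1)]
  ring
end

section
/- Duplication relation for S-sums: let m ≥ 1, let a_1,…,a_m be positive integers, b_1,…,b_m positive reals, and n ∈ ℕ. Then Σ_{(σ_1,…,σ_m) ∈ {−1,1}^m} S_{a_1,…,a_m}(σ_1 b_1,…,σ_m b_m; 2n) = 2^{m − (a_1+⋯+a_m)} · S_{a_1,…,a_m}(b_1²,…,b_m²; n), where the sum on the left runs over all 2^m choices of signs σ_i ∈ {−1,1}. -/
/-- S-sums: `SSum [(a₁,x₁),…] n` is `S_{a₁,…}(x₁,…; n)`; the empty sum equals `1`. -/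
noncomputable def SSum : List (ℕ × ℝ) → ℕ → ℝ
  | [], _ => 1
  | (a, x) :: t, n => ∑ i ∈ Finset.Icc 1 n, x ^ i / (i : ℝ) ^ a * SSum t i

theorem sum_even_aux (b : ℝ) (a : ℕ) (T : ℕ → ℝ) (n : ℕ) :
    ∑ i ∈ Finset.Icc 1 (2 * n), (b ^ i + (-b) ^ i) / (i : ℝ) ^ a * T i =
      ∑ i ∈ Finset.Icc 1 n, (2 : ℝ) ^ (1 - (a : ℤ)) * ((b ^ 2) ^ i / (i : ℝ) ^ a * T (2 * i)) := by
  induction n with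
  | zero => simp
  | succ n ih =>
    rw [show 2 * (n + 1) = 2 * n + 1 + 1 by ring, Finset.sum_Icc_succ_top (by omega),
      Finset.sum_Icc_succ_top (by omega), ih, Finset.sum_Icc_succ_top (by omega)]
    have h1 : (-b) ^ (2 * n + 1) = - b ^ (2 * n + 1) := Odd.neg_pow ⟨n, rfl⟩ b
    have h2 : (-b) ^ (2 * n + 1 + 1) = b ^ (2 * n + 1 + 1) :=
      Even.neg_pow ⟨n + 1, by ring⟩ b
    have h3 : ((2 * n + 1 + 1 : ℕ) : ℝ) = 2 * ((n + 1 : ℕ) : ℝ) := by push_cast; ring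
    have h4 : (2 : ℝ) ^ (1 - (a : ℤ)) = 2 / 2 ^ a := by
      rw [zpow_sub₀ (by norm_num)]; simp
    rw [h1, h2, h3, h4, mul_pow, ← pow_mul, show 2 * (n + 1) = 2 * n + 1 + 1 by ring]
    have h5 : ((n + 1 : ℕ) : ℝ) ≠ 0 := by positivity
    field_simp
    ring

theorem SSum_dup_aux (m : ℕ) : ∀ (a : Fin m → ℕ) (b : Fin m → ℝ) (n : ℕ),
    ∑ σ : Fin m → Bool,
        SSum (List.ofFn fun i => (a i, (if σ i then (1 : ℝ) else -1) * b i)) (2 * n) =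
      (2 : ℝ) ^ ((m : ℤ) - ∑ i, (a i : ℤ)) *
        SSum (List.ofFn fun i => (a i, b i ^ 2)) n := by
  induction m with
  | zero => intro a b n; simp [SSum]
  | succ m ih =>
    intro a b n
    rw [← (Fin.consEquiv (fun _ : Fin (m + 1) => Bool)).sum_comp, Fintype.sum_prod_type]
    simp only [List.ofFn_succ, SSum, Fin.consEquiv_apply, Fin.cons_zero, Fin.cons_succ,
      Fintype.sum_bool]
    rw [Finset.sum_comm, Finset.sum_comm (s := Finset.univ), ← Finset.sum_add_distrib]
    simp only [← Finset.mul_sum]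
    have := sum_even_aux (b 0) (a 0) (fun i => ∑ σ : Fin m → Bool,
        SSum (List.ofFn fun j => (a j.succ, (if σ j then (1 : ℝ) else -1) * b j.succ)) i) n
    simp only [ih (fun j => a j.succ) (fun j => b j.succ)] at this
    rw [Finset.mul_sum]
    convert this using 1
    · refine Finset.sum_congr rfl fun i _ => ?_
      simp only [if_true, Bool.false_eq_true, if_false]
      ring
    · refine Finset.sum_congr rfl fun i _ => ?_
      rw [Fin.sum_univ_succ, show ((m + 1 : ℕ) : ℤ) - ((a 0 : ℤ) + ∑ i : Fin m, (a i.succ : ℤ)) =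
        (1 - (a 0 : ℤ)) + ((m : ℤ) - ∑ i : Fin m, (a i.succ : ℤ)) by push_cast; ring,
        zpow_add₀ (by norm_num)]
      ring

/-- Duplication relation for S-sums (depth `m + 1 ≥ 1`):
the sum over all `2^(m+1)` sign choices of `S_{a}(±b; 2n)` equals
`2^{(m+1) − (a₁+⋯+a_{m+1})} S_{a}(b²; n)`. -/
theorem SSum_duplication (m : ℕ) (a : Fin (m + 1) → ℕ) (b : Fin (m + 1) → ℝ) (n : ℕ)
    (ha : ∀ i, 0 < a i) (hb : ∀ i, 0 < b i) :
    ∑ σ : Fin (m + 1) → Bool,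
        SSum (List.ofFn fun i => (a i, (if σ i then (1 : ℝ) else -1) * b i)) (2 * n) =
      (2 : ℝ) ^ ((m + 1 : ℤ) - ∑ i, (a i : ℤ)) *
        SSum (List.ofFn fun i => (a i, b i ^ 2)) n := by
  have := SSum_dup_aux (m + 1) a b n
  push_cast at this
  exact this
end

section
/- First duplication relation for cyclotomic harmonic sums: let m ≥ 1, let a_1,…,a_m and c_1,…,c_m be positive integers, b_1,…,b_m nonnegative integers, and n ∈ ℕ. Then Σ_{(σ_1,…,σ_m) ∈ {−1,1}^m} S_{(a_1,b_1,σ_1 c_1),…,(a_m,b_m,σ_m c_m)}(2n) = 2^m · S_{(2a_1,b_1,c_1),…,(2a_m,b_m,c_m)}(n), where the sum on the left runs over all 2^m choices of signs σ_i ∈ {−1,1}. -/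
/-- Cyclotomic harmonic sums: `cycH [(a₁,b₁,c₁),…] n` is `S_{(a₁,b₁,c₁),…}(n)`;
the empty sum equals `1`. -/
noncomputable def cycH : List (ℕ × ℤ × ℤ) → ℕ → ℝ
  | [], _ => 1
  | (a, b, c) :: t, n =>
      ∑ i ∈ Finset.Icc 1 n,
        ((c.sign : ℝ)) ^ i / ((a : ℝ) * i + (b : ℝ)) ^ c.natAbs * cycH t i

theorem sum_Icc_two_mul_of_odd_zero (f : ℕ → ℝ) (hf : ∀ j, f (2 * j + 1) = 0) (n : ℕ) :
    ∑ i ∈ Finset.Icc 1 (2 * n), f i = ∑ j ∈ Finset.Icc 1 n, f (2 * j) := by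
  induction n with
  | zero => simp
  | succ n ih =>
    rw [show 2 * (n + 1) = 2 * n + 1 + 1 by ring, Finset.sum_Icc_succ_top (by omega),
      Finset.sum_Icc_succ_top (by omega), Finset.sum_Icc_succ_top (by omega), ih, hf]
    simp [show 2 * (n + 1) = 2 * n + 1 + 1 by ring]

theorem cycH_duplication_aux (k : ℕ) : ∀ (a c b : Fin k → ℕ) (n : ℕ)
    (_ : ∀ i, 0 < c i),
    ∑ σ : Fin k → Bool,
        cycH (List.ofFn fun i =>
          (a i, (b i : ℤ), (if σ i then 1 else -1) * (c i : ℤ))) (2 * n) =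
      (2 : ℝ) ^ k *
        cycH (List.ofFn fun i => (2 * a i, (b i : ℤ), (c i : ℤ))) n := by
  induction k with
  | zero => intro a c b n _; simp [cycH]
  | succ k ih =>
    intro a c b n hc
    have h0 : Int.sign (c 0 : ℤ) = 1 := Int.sign_eq_one_of_pos (by exact_mod_cast hc 0)
    rw [← (Fin.consEquiv (fun _ : Fin (k + 1) => Bool)).sum_comp, Fintype.sum_prod_type]
    simp only [Fin.consEquiv_apply, List.ofFn_succ, Fin.cons_zero, Fin.cons_succ, cycH,
      Fintype.sum_bool, if_true, Bool.false_eq_true, if_false, one_mul, neg_mul, Int.sign_neg,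
      Int.natAbs_neg, Int.natAbs_natCast, h0]
    rw [← Finset.sum_add_distrib, Finset.sum_congr rfl (fun _ _ => Finset.sum_add_distrib.symm),
      Finset.sum_comm, sum_Icc_two_mul_of_odd_zero, Finset.mul_sum]
    · refine Finset.sum_congr rfl fun j _ => ?_
      have := ih (fun i => a i.succ) (fun i => c i.succ) (fun i => b i.succ) j
        (fun i => hc i.succ)
      rw [Finset.sum_add_distrib, ← Finset.mul_sum, ← Finset.mul_sum, this]
      simp only [Int.cast_one, Int.cast_neg, one_pow, pow_mul, neg_sq]
      push_cast
      ring
    · intro j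
      refine Finset.sum_eq_zero fun τ _ => ?_
      simp [pow_add, pow_mul]
      ring

/-- First duplication relation for cyclotomic harmonic sums:
the sum over all `2^(m+1)` sign choices of `S_{(aᵢ,bᵢ,±cᵢ)}(2n)` equals
`2^(m+1) · S_{(2aᵢ,bᵢ,cᵢ)}(n)`. -/
theorem cycH_duplication_first (m : ℕ) (a c b : Fin (m + 1) → ℕ) (n : ℕ)
    (ha : ∀ i, 0 < a i) (hc : ∀ i, 0 < c i) :
    ∑ σ : Fin (m + 1) → Bool,
        cycH (List.ofFn fun i =>
          (a i, (b i : ℤ), (if σ i then 1 else -1) * (c i : ℤ))) (2 * n) =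
      (2 : ℝ) ^ (m + 1) *
        cycH (List.ofFn fun i => (2 * a i, (b i : ℤ), (c i : ℤ))) n := by
  exact cycH_duplication_aux (m + 1) a c b n hc
end

section
/- Second duplication relation for cyclotomic harmonic sums: let m ≥ 1, let a_1,…,a_m and c_1,…,c_m be positive integers, b_1,…,b_m nonnegative integers, and n ∈ ℕ. Then Σ_{(σ_1,…,σ_m) ∈ {−1,1}^m} σ_1 σ_2 ⋯ σ_m · S_{(a_1,b_1,σ_1 c_1),…,(a_m,b_m,σ_m c_m)}(2n) = 2^m · S_{(2a_1, b_1 − a_1, c_1),…,(2a_m, b_m − a_m, c_m)}(n); note that 2a_i + (b_i − a_i) = a_i + b_i > 0, so the sums on the right are well defined. -/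
theorem cycH_dup_aux_sum (f g : ℕ → ℝ) (h0 : ∀ j, f (2 * j + 1) = g (j + 1))
    (h1 : ∀ j, f (2 * j) = 0) (N : ℕ) :
    ∑ i ∈ Finset.Icc 1 N, f i = ∑ j ∈ Finset.Icc 1 ((N + 1) / 2), g j := by
  induction N with
  | zero => simp
  | succ N ih =>
    rw [Finset.sum_Icc_succ_top (by omega), ih]
    rcases Nat.even_or_odd' N with ⟨k, rfl | rfl⟩
    · rw [h0, show (2 * k + 1 + 1) / 2 = k + 1 by omega, show (2 * k + 1) / 2 = k by omega,
        Finset.sum_Icc_succ_top (by omega)]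
    · rw [show 2 * k + 1 + 1 = 2 * (k + 1) by ring, h1,
        show (2 * (k + 1) + 1) / 2 = k + 1 by omega, show 2 * (k + 1) / 2 = k + 1 by omega,
        add_zero]

theorem cycH_dup_aux (m : ℕ) : ∀ (a c b : Fin m → ℕ) (_ : ∀ i, 0 < c i) (N : ℕ),
    ∑ σ : Fin m → Bool,
        (∏ i, (if σ i then (1 : ℝ) else -1)) *
          cycH (List.ofFn fun i =>
            (a i, (b i : ℤ), (if σ i then 1 else -1) * (c i : ℤ))) N =
      (2 : ℝ) ^ m *
        cycH (List.ofFn fun i => (2 * a i, (b i : ℤ) - (a i : ℤ), (c i : ℤ))) ((N + 1) / 2) := by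
  induction m with
  | zero => intro a c b _ N; simp [cycH]
  | succ m ih =>
    intro a c b hc N
    have ih' := ih (fun i => a i.succ) (fun i => c i.succ) (fun i => b i.succ)
      (fun i => hc i.succ)
    have hs : ((c 0 : ℤ)).sign = 1 := Int.sign_eq_one_of_pos (by exact_mod_cast hc 0)
    rw [← (Fin.consEquiv (fun _ : Fin (m + 1) => Bool)).sum_comp, Fintype.sum_prod_type]
    simp only [Fin.consEquiv_apply, List.ofFn_succ, Fin.prod_univ_succ, Fin.cons_zero,
      Fin.cons_succ, cycH, Fintype.sum_bool]
    rw [← Finset.sum_add_distrib]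
    simp only [if_true, Bool.false_eq_true, if_false, one_mul, neg_mul, Int.sign_neg, hs,
      Int.natAbs_neg, Int.natAbs_natCast, Int.cast_one, one_pow, Int.cast_neg]
    have key : ∀ σ : Fin m → Bool, ∀ P : ℝ, ∀ F : ℕ → ℝ,
        P * (∑ i ∈ Finset.Icc 1 N, 1 / ((a 0 : ℝ) * i + ((b 0 : ℤ) : ℝ)) ^ c 0 * F i) +
        -(P * ∑ i ∈ Finset.Icc 1 N, (-1) ^ i / ((a 0 : ℝ) * i + ((b 0 : ℤ) : ℝ)) ^ c 0 * F i)
        = ∑ i ∈ Finset.Icc 1 N,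
          (1 - (-1) ^ i) / ((a 0 : ℝ) * i + ((b 0 : ℤ) : ℝ)) ^ c 0 * (P * F i) := by
      intro _ P F
      rw [← sub_eq_add_neg, ← mul_sub, ← Finset.sum_sub_distrib, Finset.mul_sum]
      exact Finset.sum_congr rfl fun i _ => by ring
    rw [Finset.sum_congr rfl fun σ _ => key σ _ _, Finset.sum_comm]
    simp only [← Finset.mul_sum]
    simp only [ite_mul, one_mul, neg_mul] at ih' ⊢
    simp only [ih']
    rw [Finset.mul_sum]
    apply cycH_dup_aux_sum
    · intro j
      rw [show (2 * j + 1 + 1) / 2 = j + 1 by omega]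
      have : ((-1 : ℝ)) ^ (2 * j + 1) = -1 := Odd.neg_one_pow ⟨j, rfl⟩
      rw [this]
      have e : (a 0 : ℝ) * ((2 * j + 1 : ℕ) : ℝ) + ((b 0 : ℤ) : ℝ)
          = ((2 * a 0 : ℕ) : ℝ) * ((j + 1 : ℕ) : ℝ) + (((b 0 : ℤ) - (a 0 : ℤ) : ℤ) : ℝ) := by
        push_cast; ring
      rw [e]; ring
    · intro j
      simp

/-- Second duplication relation for cyclotomic harmonic sums:
the signed sum over all `2^(m+1)` sign choices `σ` of
`σ₁⋯σ_{m+1} · S_{(aᵢ,bᵢ,σᵢcᵢ)}(2n)` equals `2^(m+1) · S_{(2aᵢ,bᵢ−aᵢ,cᵢ)}(n)`. -/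
theorem cycH_duplication_second (m : ℕ) (a c b : Fin (m + 1) → ℕ) (n : ℕ)
    (ha : ∀ i, 0 < a i) (hc : ∀ i, 0 < c i) :
    ∑ σ : Fin (m + 1) → Bool,
        (∏ i, (if σ i then (1 : ℝ) else -1)) *
          cycH (List.ofFn fun i =>
            (a i, (b i : ℤ), (if σ i then 1 else -1) * (c i : ℤ))) (2 * n) =
      (2 : ℝ) ^ (m + 1) *
        cycH (List.ofFn fun i => (2 * a i, (b i : ℤ) - (a i : ℤ), (c i : ℤ))) n := by
  have h := cycH_dup_aux (m + 1) a c b hc (2 * n)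
  rwa [show (2 * n + 1) / 2 = n by omega] at h
end

section
/- Multiple-argument relation for depth-one cyclotomic S-sums: let a, c, k be positive integers with k ≥ 2, b a nonnegative integer, x a nonzero real, and n ∈ ℕ. Then S_{(a,b,c)}(x; k·n) = Σ_{i=0}^{k−1} x^{−i} · S_{(k·a, b − a·i, c)}(x^k; n); note that k·a + (b − a·i) ≥ a + b > 0 for 0 ≤ i ≤ k−1, so the sums on the right are well defined. -/
/-- Multiple-argument relation for depth-one cyclotomic S-sums:
`S_{(a,b,c)}(x; k·n) = Σ_{i=0}^{k−1} x^{−i} · S_{(k·a, b − a·i, c)}(x^k; n)`. -/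
theorem cycS_depth_one_mult_arg (a c k b : ℕ) (x : ℝ) (n : ℕ)
    (ha : 0 < a) (hc : 0 < c) (hk : 2 ≤ k) (hx : x ≠ 0) :
    cycS [((a, (b : ℤ), c), x)] (k * n) =
      ∑ i ∈ Finset.range k, x ^ (-(i : ℤ)) *
        cycS [((k * a, (b : ℤ) - (a : ℤ) * (i : ℤ), c), x ^ k)] n := by
  have key : ∀ (f : ℕ → ℝ) (m : ℕ),
      ∑ i ∈ Finset.Icc 1 m, f i = ∑ i ∈ Finset.range m, f (i + 1) := by
    intro f m
    induction m with
    | zero => simp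
    | succ m ih => rw [Finset.sum_Icc_succ_top (by omega), ih, Finset.sum_range_succ]
  simp only [cycS, mul_one, key]
  induction n with
  | zero => simp
  | succ n ih =>
    rw [Nat.mul_succ, Finset.sum_range_add, ih]
    simp only [Finset.sum_range_succ _ n, mul_add, Finset.sum_add_distrib]
    congr 1
    rw [← Finset.sum_range_reflect]
    apply Finset.sum_congr rfl
    intro i hi
    have hik : i < k := Finset.mem_range.mp hi
    have e : k * n + (k - 1 - i) + 1 = k * (n + 1) - i := by
      rw [Nat.mul_succ]; omega
    have hle : i ≤ k * (n + 1) := by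
      rw [Nat.mul_succ]; omega
    rw [e, Nat.cast_sub hle, pow_sub₀ x hx hle, ← pow_mul, zpow_neg, zpow_natCast]
    have d : (a : ℝ) * (((k * (n + 1) : ℕ) : ℝ) - (i : ℝ)) + ((b : ℤ) : ℝ)
        = ((k * a : ℕ) : ℝ) * ((n + 1 : ℕ) : ℝ)
          + (((b : ℤ) - (a : ℤ) * (i : ℤ) : ℤ) : ℝ) := by
      push_cast; ring
    rw [d]
    ring
end

section
/- Multiple-argument relation for depth-one cyclotomic harmonic sums: let a, k be positive integers with k ≥ 2, b a nonnegative integer, c a nonzero integer, and n ∈ ℕ. Then S_{(a,b,c)}(k·n) = Σ_{i=0}^{k−1} sgn(c)^i · S_{(k·a, b − a·i, sgn(c)^k·|c|)}(n); note that k·a + (b − a·i) ≥ a + b > 0 for 0 ≤ i ≤ k−1, so the sums on the right are well defined. -/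
theorem sum_Icc_mul_split (f : ℕ → ℝ) (k n : ℕ) :
    ∑ j ∈ Finset.Icc 1 (k * n), f j =
      ∑ i ∈ Finset.range k, ∑ m ∈ Finset.Icc 1 n, f (k * m - i) := by
  induction n with
  | zero => simp
  | succ n ih =>
    simp_rw [Finset.sum_Icc_succ_top (Nat.le_add_left 1 n)]
    rw [Finset.sum_add_distrib, ← ih]
    have key : ∀ N p : ℕ, ∑ j ∈ Finset.Icc 1 (N + p), f j =
        ∑ j ∈ Finset.Icc 1 N, f j + ∑ i ∈ Finset.range p, f (N + i + 1) := by
      intro N p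
      induction p with
      | zero => simp
      | succ p ihp =>
        rw [← add_assoc, Finset.sum_Icc_succ_top (by omega), ihp, Finset.sum_range_succ, add_assoc]
    rw [mul_add, mul_one, key, ← Finset.sum_range_reflect]
    congr 1
    apply Finset.sum_congr rfl
    intro i hi
    have := Finset.mem_range.mp hi
    congr 1
    omega

/-- Multiple-argument relation for depth-one cyclotomic harmonic sums:
`S_{(a,b,c)}(k·n) = Σ_{i=0}^{k−1} sgn(c)^i · S_{(k·a, b − a·i, sgn(c)^k·|c|)}(n)`. -/
theorem cycH_depth_one_mult_arg (a k b : ℕ) (c : ℤ) (n : ℕ)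
    (ha : 0 < a) (hk : 2 ≤ k) (hc : c ≠ 0) :
    cycH [(a, (b : ℤ), c)] (k * n) =
      ∑ i ∈ Finset.range k, ((c.sign : ℝ)) ^ i *
        cycH [(k * a, (b : ℤ) - (a : ℤ) * (i : ℤ), c.sign ^ k * (c.natAbs : ℤ))] n := by
  have hk0 : k ≠ 0 := by omega
  have hs : c.sign = 1 ∨ c.sign = -1 := by
    rcases lt_or_gt_of_ne hc with h | h
    · right; exact Int.sign_eq_neg_one_of_neg h
    · left; exact Int.sign_eq_one_of_pos h
  have hss : (c.sign : ℝ) * (c.sign : ℝ) = 1 := by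
    rcases hs with h | h <;> simp [h]
  have hcn : 0 < c.natAbs := Int.natAbs_pos.mpr hc
  have hsign : (c.sign ^ k * (c.natAbs : ℤ)).sign = c.sign ^ k := by
    rw [Int.sign_mul, Int.sign_eq_one_of_pos (by exact_mod_cast hcn : (0 : ℤ) < c.natAbs), mul_one]
    rcases hs with h | h
    · simp [h]
    · rw [h]; rcases neg_one_pow_eq_or ℤ k with h | h <;> simp [h]
  have habs : (c.sign ^ k * (c.natAbs : ℤ)).natAbs = c.natAbs := by
    rw [Int.natAbs_mul, Int.natAbs_pow, Int.natAbs_natCast]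
    rcases hs with h | h <;> simp [h]
  simp only [cycH, hsign, habs, mul_one]
  rw [sum_Icc_mul_split]
  apply Finset.sum_congr rfl
  intro i hi
  rw [Finset.mul_sum]
  apply Finset.sum_congr rfl
  intro m hm
  have hi' := Finset.mem_range.mp hi
  have hm' := (Finset.mem_Icc.mp hm).1
  have hle : i ≤ k * m := by nlinarith
  obtain ⟨d, hd⟩ := Nat.exists_eq_add_of_le hle
  have hdR : (k : ℝ) * m = i + d := by exact_mod_cast hd
  have hpow : (c.sign : ℝ) ^ i * (((c.sign ^ k : ℤ) : ℝ)) ^ m = (c.sign : ℝ) ^ d := by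
    push_cast
    rw [← pow_mul, hd, pow_add, ← mul_assoc, ← mul_pow, hss, one_pow, one_mul]
  have hden : ((k * a : ℕ) : ℝ) * m + (((b : ℤ) - (a : ℤ) * (i : ℤ) : ℤ) : ℝ)
      = (a : ℝ) * (d : ℝ) + ((b : ℤ) : ℝ) := by
    push_cast
    linear_combination (a : ℝ) * hdR
  have hkd : k * m - i = d := by omega
  rw [hkd, hden, ← mul_div_assoc, hpow]
end

section
/- Mellin transforms of the weight-one harmonic polylogarithms: for every n ∈ ℕ, (1) ∫_0^1 x^n · log x dx = −1/(n+1)²; (2) ∫_0^1 x^n · (−log(1−x)) dx = S_1(n+1)/(n+1), where S_1(m) = Σ_{i=1}^m 1/i; (3) ∫_0^1 x^n · log(1+x) dx = (−1)^n · S_{−1}(n+1)/(n+1) + (1 + (−1)^n) · log 2/(n+1), where S_{−1}(m) = Σ_{i=1}^m (−1)^i/i. -/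
theorem aux_congr {f g : ℝ → ℝ} {a b x : ℝ} (h : HasDerivAt f a x)
    (hf : ∀ y, g y = f y) (hab : b = a) : HasDerivAt g b x := by
  obtain rfl : g = f := funext hf
  rw [hab]
  exact h

theorem aux_hasDerivAt (m : ℕ) (y : ℝ) :
    HasDerivAt (fun y : ℝ => ∑ i ∈ Finset.range m, y ^ (i + 1) / ((i : ℝ) + 1))
      (∑ i ∈ Finset.range m, y ^ i) y := by
  apply HasDerivAt.fun_sum
  intro i _
  have h := (hasDerivAt_pow (i + 1) y).div_const ((i : ℝ) + 1)
  refine aux_congr h (fun y => rfl) ?_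
  have : (i : ℝ) + 1 ≠ 0 := by positivity
  push_cast
  field_simp

theorem aux_sum_s12 (m : ℕ) (c : ℝ) :
    ∑ i ∈ Finset.Icc 1 m, c ^ i / (i : ℝ) =
      ∑ i ∈ Finset.range m, c ^ (i + 1) / ((i : ℝ) + 1) := by
  induction m with
  | zero => simp
  | succ k ih =>
    rw [Finset.sum_Icc_succ_top (by omega), Finset.sum_range_succ, ih]
    push_cast
    rfl

theorem aux_one_s12 (n : ℕ) :
    ∫ x in (0 : ℝ)..1, x ^ n * Real.log x = -(1 / ((n : ℝ) + 1) ^ 2) := by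
  have hn : (n : ℝ) + 1 ≠ 0 := by positivity
  have h := intervalIntegral.integral_eq_sub_of_hasDerivAt_of_le (a := 0) (b := 1)
    (f := fun x : ℝ => x ^ n * (x * Real.log x) / ((n : ℝ) + 1)
      - x ^ (n + 1) / ((n : ℝ) + 1) ^ 2)
    (f' := fun x => x ^ n * Real.log x) zero_le_one ?_ ?_ ?_
  · rw [h]; simp
  · have := Real.continuous_mul_log
    exact Continuous.continuousOn (by fun_prop)
  · intro x hx
    have hx0 : x ≠ 0 := hx.1.ne'
    have h1 := (((hasDerivAt_pow (n + 1) x).mul (Real.hasDerivAt_log hx0)).div_const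
      ((n : ℝ) + 1)).sub ((hasDerivAt_pow (n + 1) x).div_const (((n : ℝ) + 1) ^ 2))
    refine aux_congr h1 (fun y => ?_) ?_
    · simp only [Pi.sub_apply, Pi.mul_apply]
      ring
    · push_cast
      field_simp
      ring
  · exact intervalIntegral.intervalIntegrable_log'.continuousOn_mul (by fun_prop)

theorem aux_two (n : ℕ) :
    ∫ x in (0 : ℝ)..1, x ^ n * (-Real.log (1 - x)) =
      (∑ i ∈ Finset.Icc 1 (n + 1), 1 / (i : ℝ)) / ((n : ℝ) + 1) := by
  have hn : (n : ℝ) + 1 ≠ 0 := by positivity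
  have h := intervalIntegral.integral_eq_sub_of_hasDerivAt_of_le (a := 0) (b := 1)
    (f := fun x : ℝ => ((∑ i ∈ Finset.range (n + 1), x ^ i) * ((1 - x) * Real.log (1 - x))
      + ∑ i ∈ Finset.range (n + 1), x ^ (i + 1) / ((i : ℝ) + 1)) / ((n : ℝ) + 1))
    (f' := fun x => x ^ n * (-Real.log (1 - x))) zero_le_one ?_ ?_ ?_
  · rw [h]
    have := aux_sum_s12 (n + 1) 1
    simp only [one_pow] at this
    rw [this]
    simp
  · have h1 : Continuous fun x : ℝ => (1 - x) * Real.log (1 - x) :=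
      Real.continuous_mul_log.comp (by fun_prop : Continuous fun x : ℝ => 1 - x)
    exact Continuous.continuousOn (by fun_prop)
  · intro x hx
    have hx0 : 1 - x ≠ 0 := by linarith [hx.2]
    have hl := ((hasDerivAt_id x).const_sub 1).log hx0
    have h1 := ((((hasDerivAt_pow (n + 1) x).const_sub 1).mul hl).add
      (aux_hasDerivAt (n + 1) x)).div_const ((n : ℝ) + 1)
    refine aux_congr h1 (fun y => ?_) ?_
    · simp only [Pi.add_apply, Pi.mul_apply, id]
      rw [← geom_sum_mul_neg]
      ring
    · have hg := geom_sum_mul_neg x (n + 1)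
      rw [← hg]
      push_cast
      simp only [id]
      field_simp
      ring
  · have h1 := (intervalIntegral.intervalIntegrable_log' (a := 1) (b := 0)).comp_sub_left 1
    simp only [sub_self, sub_zero] at h1
    exact h1.neg.continuousOn_mul (by fun_prop)

theorem aux_three (n : ℕ) :
    ∫ x in (0 : ℝ)..1, x ^ n * Real.log (1 + x) =
      (-1 : ℝ) ^ n * (∑ i ∈ Finset.Icc 1 (n + 1), (-1 : ℝ) ^ i / (i : ℝ)) / ((n : ℝ) + 1) +
        (1 + (-1 : ℝ) ^ n) * Real.log 2 / ((n : ℝ) + 1) := by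
  have hn : (n : ℝ) + 1 ≠ 0 := by positivity
  have hc : ContinuousOn (fun x : ℝ => Real.log (1 + x)) (Set.Icc 0 1) :=
    ContinuousOn.log (by fun_prop) (fun x hx => by linarith [hx.1])
  have h := intervalIntegral.integral_eq_sub_of_hasDerivAt_of_le (a := 0) (b := 1)
    (f := fun x : ℝ => ((x ^ (n + 1) + (-1) ^ n) * Real.log (1 + x)
      + (-1) ^ n * ∑ i ∈ Finset.range (n + 1), (-x) ^ (i + 1) / ((i : ℝ) + 1)) / ((n : ℝ) + 1))
    (f' := fun x => x ^ n * Real.log (1 + x)) zero_le_one ?_ ?_ ?_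
  · rw [h, aux_sum_s12]
    norm_num
    ring
  · fun_prop
  · intro x hx
    have hx0 : 1 + x ≠ 0 := by linarith [hx.1]
    have hl := ((hasDerivAt_id x).const_add 1).log hx0
    have h1 := ((((hasDerivAt_pow (n + 1) x).add_const ((-1) ^ n)).mul hl).add
      (((aux_hasDerivAt (n + 1) (-x)).comp x (hasDerivAt_neg x)).const_mul
        ((-1) ^ n))).div_const ((n : ℝ) + 1)
    refine aux_congr h1 (fun y => rfl) ?_
    have hg := geom_sum_mul_neg (-x) (n + 1)
    have hs : ((-1 : ℝ) ^ n) * (-1) ^ n = 1 := by rw [← mul_pow]; simp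
    have hk : x ^ (n + 1) + (-1) ^ n
        = (-1) ^ n * ((∑ i ∈ Finset.range (n + 1), (-x) ^ i) * (1 + x)) := by
      rw [sub_neg_eq_add] at hg
      rw [hg, neg_pow x]
      linear_combination (-x ^ (n + 1)) * hs
    rw [hk]
    push_cast
    simp only [id]
    field_simp
    ring
  · apply ContinuousOn.intervalIntegrable
    rw [Set.uIcc_of_le zero_le_one]
    fun_prop


/-- Mellin transforms of the weight-one harmonic polylogarithms
`H_0(x) = log x`, `H_1(x) = −log(1−x)` and `H_{−1}(x) = log(1+x)`. -/
theorem mellin_weight_one_hpl (n : ℕ) :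
    (∫ x in (0 : ℝ)..1, x ^ n * Real.log x = -(1 / ((n : ℝ) + 1) ^ 2)) ∧
    (∫ x in (0 : ℝ)..1, x ^ n * (-Real.log (1 - x)) =
      (∑ i ∈ Finset.Icc 1 (n + 1), 1 / (i : ℝ)) / ((n : ℝ) + 1)) ∧
    (∫ x in (0 : ℝ)..1, x ^ n * Real.log (1 + x) =
      (-1 : ℝ) ^ n * (∑ i ∈ Finset.Icc 1 (n + 1), (-1 : ℝ) ^ i / (i : ℝ)) / ((n : ℝ) + 1) +
        (1 + (-1 : ℝ) ^ n) * Real.log 2 / ((n : ℝ) + 1)) := by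
  exact ⟨aux_one_s12 n, aux_two n, aux_three n⟩
end

section
/- Absolute convergence criterion for S-sums: let k ≥ 1, let a_1,…,a_k be positive integers and x_1,…,x_k nonzero reals. The S-sum S_{a_1,…,a_k}(x_1,…,x_k; n) is absolutely convergent as n → ∞ if and only if one of the following two conditions holds: (1) |x_1| < 1 and |x_1 x_2| ≤ 1 and … and |x_1 x_2 ⋯ x_k| ≤ 1; (2) a_1 > 1 and |x_1| = 1 and |x_2| ≤ 1 and |x_2 x_3| ≤ 1 and … and |x_2 x_3 ⋯ x_k| ≤ 1. -/
open Filter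

namespace SSumAux

/-- All prefix products (including the empty one) are at most `M`. -/
def Good (t : List (ℕ × ℝ)) (M : ℝ) : Prop :=
  ∀ j : ℕ, ((t.map Prod.snd).take j).prod ≤ M

/-- positivity of data -/
def Pos (t : List (ℕ × ℝ)) : Prop := ∀ p ∈ t, 0 < p.1 ∧ 0 < p.2

lemma Good.one_le {t M} (h : Good t M) : 1 ≤ M := by simpa using h 0

lemma Good.tail {a x t M} (h : Good ((a, x) :: t) M) (hx : 0 < x) : Good t (M / x) := by
  intro j
  rw [le_div_iff₀ hx]
  have := h (j + 1)
  simp at this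
  linarith

lemma Pos.tail {p t} (h : Pos (p :: t)) : Pos t := fun q hq => h q (List.mem_cons_of_mem _ hq)

lemma Pos.head {a x t} (h : Pos ((a, x) :: t)) : 0 < a ∧ 0 < x := h (a, x) (by simp)

lemma nonneg : ∀ t, Pos t → ∀ n, 0 ≤ SSum t n
  | [], _, n => by simp [SSum]
  | (a, x) :: t, h, n => by
    rw [SSum]
    refine Finset.sum_nonneg fun i _ => ?_
    have := nonneg t h.tail i
    have := h.head.2
    positivity

lemma term_nonneg {a x t} (h : Pos ((a, x) :: t)) (i : ℕ) :
    0 ≤ x ^ i / (i : ℝ) ^ a * SSum t i := by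
  have := nonneg t h.tail i
  have := h.head.2
  positivity

lemma mono : ∀ t, Pos t → Monotone (SSum t)
  | [], _ => by intro m n _; simp [SSum]
  | (a, x) :: t, h => by
    intro m n hmn
    rw [SSum, SSum]
    exact Finset.sum_le_sum_of_subset_of_nonneg (Finset.Icc_subset_Icc_right hmn)
      fun i _ _ => term_nonneg h i

lemma one_pos : ∀ t, Pos t → 0 < SSum t 1
  | [], _ => by simp [SSum]
  | (a, x) :: t, h => by
    have := one_pos t h.tail
    have := h.head.2
    simp [SSum]
    positivity

lemma lower : ∀ t, Pos t → ∀ j : ℕ, ∃ c > 0, ∃ A : ℕ, ∀ n : ℕ, n ≥ 1 →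
    c * ((t.map Prod.snd).take j).prod ^ n / (n : ℝ) ^ A ≤ SSum t n
  | t, h, 0 => ⟨SSum t 1, one_pos t h, 0, fun n hn => by simpa using mono t h hn⟩
  | [], h, j + 1 => ⟨1, by norm_num, 0, fun n hn => by simp [SSum]⟩
  | (a, x) :: t, h, j + 1 => by
    obtain ⟨c, hc, A, hA⟩ := lower t h.tail j
    refine ⟨c, hc, a + A, fun n hn => ?_⟩
    have hx := h.head.2
    have h1 : x ^ n / (n : ℝ) ^ a * SSum t n ≤ SSum ((a, x) :: t) n := by
      conv_rhs => rw [SSum]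
      exact Finset.single_le_sum (f := fun i : ℕ => x ^ i / (i : ℝ) ^ a * SSum t i)
        (fun i _ => term_nonneg h i) (by simp [hn])
    refine le_trans ?_ h1
    have h2 := mul_le_mul_of_nonneg_left (hA n hn) (a := x ^ n / (n : ℝ) ^ a) (by positivity)
    refine le_trans (le_of_eq ?_) h2
    have : (n : ℝ) ≠ 0 := by positivity
    simp only [List.map_cons, List.take_succ_cons, List.prod_cons]
    rw [mul_pow, pow_add]
    field_simp

lemma sum_inv_sqrt (n : ℕ) : ∑ i ∈ Finset.Icc 1 n, 1 / √(i : ℝ) ≤ 2 * √(n : ℝ) := by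
  induction n with
  | zero => simp
  | succ n ih =>
    rw [Finset.sum_Icc_succ_top (by omega)]
    have hs : 0 < √((n + 1 : ℕ) : ℝ) := Real.sqrt_pos.2 (by positivity)
    have h1 : √((n + 1 : ℕ) : ℝ) ^ 2 = (n : ℝ) + 1 := by
      rw [Real.sq_sqrt (by positivity)]; push_cast; ring
    have h2 : √(n : ℝ) ^ 2 = n := Real.sq_sqrt (by positivity)
    have h3 : 1 / √((n + 1 : ℕ) : ℝ) ≤ 2 * √((n + 1 : ℕ) : ℝ) - 2 * √(n : ℝ) := by
      rw [div_le_iff₀ hs]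
      nlinarith [sq_nonneg (√((n + 1 : ℕ) : ℝ) - √(n : ℝ))]
    linarith

lemma upper : ∀ t, Pos t → ∃ C > 0, ∀ M, Good t M → ∀ n ≥ 1, SSum t n ≤ C * M ^ n * √(n : ℝ)
  | [], _ => ⟨1, by norm_num, fun M hM n hn => by
      have h1 := one_le_pow₀ hM.one_le (n := n)
      have h2 : 1 ≤ √(n : ℝ) := Real.one_le_sqrt.2 (by exact_mod_cast hn)
      simp only [SSum]
      nlinarith⟩
  | (a, x) :: t, h => by
    obtain ⟨C, hC, hU⟩ := upper t h.tail
    obtain ⟨ha, hx⟩ := h.head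
    refine ⟨2 * C, by positivity, fun M hM n hn => ?_⟩
    have hM1 := hM.one_le
    rw [SSum]
    calc _ ≤ ∑ i ∈ Finset.Icc 1 n, C * M ^ n * (1 / √(i : ℝ)) := by
          refine Finset.sum_le_sum fun i hi => ?_
          obtain ⟨hi1, hin⟩ := Finset.mem_Icc.1 hi
          have hi0 : (1 : ℝ) ≤ i := by exact_mod_cast hi1
          have hs : 0 < √(i : ℝ) := Real.sqrt_pos.2 (by linarith)
          have hs2 : √(i : ℝ) * √(i : ℝ) = i := Real.mul_self_sqrt (by linarith)
          calc _ ≤ x ^ i / (i : ℝ) ^ 1 * (C * (M / x) ^ i * √(i : ℝ)) := by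
                gcongr
                · exact nonneg t h.tail i
                · exact ha
                · exact hU _ (hM.tail hx) i hi1
            _ = C * M ^ i * (1 / √(i : ℝ)) := by
                rw [div_pow, pow_one]
                nth_rewrite 1 [← hs2]
                field_simp
            _ ≤ _ := by
                gcongr
      _ = C * M ^ n * ∑ i ∈ Finset.Icc 1 n, 1 / √(i : ℝ) := by rw [Finset.mul_sum]
      _ ≤ C * M ^ n * (2 * √(n : ℝ)) := by
          gcongr
          exact sum_inv_sqrt n
      _ = _ := by ring

lemma geo (M : ℝ) (hM : 1 < M) : ∃ C > 0, ∀ n : ℕ,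
    ∑ i ∈ Finset.Icc 1 n, M ^ i * (n / i : ℝ) ≤ C * M ^ n := by
  have hM0 : 0 < M := by linarith
  have hr : ‖M⁻¹‖ < 1 := by
    rw [Real.norm_of_nonneg (by positivity)]
    exact inv_lt_one_of_one_lt₀ hM
  have hs : Summable fun m : ℕ => ((m : ℝ) + 1) * M⁻¹ ^ m := by
    have h1 := summable_pow_mul_geometric_of_norm_lt_one 1 hr
    have h2 := summable_geometric_of_norm_lt_one hr
    refine (h1.add h2).congr fun m => by ring
  have hnn : ∀ m : ℕ, 0 ≤ ((m : ℝ) + 1) * M⁻¹ ^ m := fun m => by positivity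
  refine ⟨(∑' m : ℕ, ((m : ℝ) + 1) * M⁻¹ ^ m) + 1, ?_, fun n => ?_⟩
  · have : 0 ≤ ∑' m : ℕ, ((m : ℝ) + 1) * M⁻¹ ^ m := tsum_nonneg hnn
    linarith
  have key : ∑ i ∈ Finset.Icc 1 n, M ^ i * (n / i : ℝ) ≤
      ∑ i ∈ Finset.range (n + 1), (((n - i : ℕ) : ℝ) + 1) * M⁻¹ ^ (n - i) * M ^ n := by
    refine le_trans (Finset.sum_le_sum fun i hi => ?_)
      (Finset.sum_le_sum_of_subset_of_nonneg (s := Finset.Icc 1 n) ?_ fun i _ _ => ?_)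
    · obtain ⟨hi1, hin⟩ := Finset.mem_Icc.1 hi
      obtain ⟨d, rfl⟩ := Nat.exists_eq_add_of_le hin
      have hi0 : (1 : ℝ) ≤ i := by exact_mod_cast hi1
      have e : i + d - i = d := by omega
      rw [e, inv_pow, pow_add]
      have : ((d : ℝ) + 1) * (M ^ d)⁻¹ * (M ^ i * M ^ d) = M ^ i * (d + 1) := by field_simp
      rw [this]
      gcongr
      rw [div_le_iff₀ (by linarith)]
      push_cast
      have : (0 : ℝ) ≤ d := by positivity
      nlinarith
    · intro i hi
      simp at hi ⊢
      omega
    · positivity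
  refine key.trans ?_
  rw [← Finset.sum_mul]
  gcongr
  have := Finset.sum_range_reflect (fun m : ℕ => ((m : ℝ) + 1) * M⁻¹ ^ m) (n + 1)
  simp only [Nat.add_sub_cancel] at this
  rw [this]
  have := hs.sum_le_tsum (Finset.range (n + 1)) (fun m _ => hnn m)
  linarith

lemma upper' (t) (h : Pos t) (M : ℝ) (hM : 1 < M) (hG : Good t M) :
    ∃ C > 0, ∀ n ≥ 1, SSum t n ≤ C * M ^ n / √(n : ℝ) := by
  have hM0 : 0 < M := by linarith
  obtain ⟨D, hD, hgeo⟩ := geo M hM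
  -- `√n * (M^i / √i) ≤ M^i * (n / i)`
  have hsum : ∀ n : ℕ, n ≥ 1 → ∑ i ∈ Finset.Icc 1 n, M ^ i * (1 / √(i : ℝ)) ≤ D * M ^ n / √(n : ℝ) := by
    intro n hn
    have hn0 : (1 : ℝ) ≤ n := by exact_mod_cast hn
    rw [le_div_iff₀ (Real.sqrt_pos.2 (by linarith))]
    refine le_trans ?_ (hgeo n)
    rw [Finset.sum_mul]
    refine Finset.sum_le_sum fun i hi => ?_
    obtain ⟨hi1, hin⟩ := Finset.mem_Icc.1 hi
    have hi0 : (1 : ℝ) ≤ i := by exact_mod_cast hi1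
    have hin' : (i : ℝ) ≤ n := by exact_mod_cast hin
    have e : M ^ i * (1 / √(i : ℝ)) * √(n : ℝ) = M ^ i * √(n / i : ℝ) := by
      rw [Real.sqrt_div (by linarith)]; ring
    rw [e]
    have h1 : 1 ≤ (n / i : ℝ) := by rw [le_div_iff₀ (by linarith)]; linarith
    gcongr
    exact Real.sqrt_le_iff.2 ⟨by linarith, by nlinarith⟩
  match t, h, hG with
  | [], _, _ =>
    refine ⟨D, hD, fun n hn => le_trans ?_ (hsum n hn)⟩
    have := Finset.single_le_sum (f := fun i : ℕ => M ^ i * (1 / √(i : ℝ)))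
        (s := Finset.Icc 1 n) (fun i _ => by positivity) (a := 1) (by simp [hn])
    simp at this
    simp [SSum]
    linarith
  | (a, x) :: t, h, hG =>
    obtain ⟨C, hC, hU⟩ := upper t h.tail
    obtain ⟨ha, hx⟩ := h.head
    refine ⟨C * D, by positivity, fun n hn => ?_⟩
    rw [SSum]
    calc _ ≤ ∑ i ∈ Finset.Icc 1 n, C * (M ^ i * (1 / √(i : ℝ))) := by
          refine Finset.sum_le_sum fun i hi => ?_
          obtain ⟨hi1, hin⟩ := Finset.mem_Icc.1 hi
          have hi0 : (1 : ℝ) ≤ i := by exact_mod_cast hi1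
          have hs : 0 < √(i : ℝ) := Real.sqrt_pos.2 (by linarith)
          have hs2 : √(i : ℝ) * √(i : ℝ) = i := Real.mul_self_sqrt (by linarith)
          calc _ ≤ x ^ i / (i : ℝ) ^ 1 * (C * (M / x) ^ i * √(i : ℝ)) := by
                gcongr
                · exact nonneg t h.tail i
                · exact ha
                · exact hU _ (hG.tail hx) i hi1
            _ = C * (M ^ i * (1 / √(i : ℝ))) := by
                rw [div_pow, pow_one]
                nth_rewrite 1 [← hs2]
                field_simp
      _ = C * ∑ i ∈ Finset.Icc 1 n, M ^ i * (1 / √(i : ℝ)) := by rw [Finset.mul_sum]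
      _ ≤ C * (D * M ^ n / √(n : ℝ)) := by
          gcongr
          exact hsum n hn
      _ = _ := by ring

lemma conv_of_bound {a x t} (h : Pos ((a, x) :: t)) (C : ℝ)
    (hb : ∀ i : ℕ, 1 ≤ i → x ^ i / (i : ℝ) ^ a * SSum t i ≤ C * (1 / (i : ℝ) ^ (3 / 2 : ℝ))) :
    ∃ L : ℝ, Tendsto (SSum ((a, x) :: t)) atTop (nhds L) := by
  have hs : Summable fun i : ℕ => C * (1 / (i : ℝ) ^ (3 / 2 : ℝ)) :=
    (Real.summable_one_div_nat_rpow.2 (by norm_num)).mul_left C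
  have h0 : 0 ≤ C := by
    have := (term_nonneg h 1).trans (hb 1 le_rfl)
    simpa using this
  refine ⟨_, tendsto_atTop_ciSup (mono _ h) ⟨∑' i : ℕ, C * (1 / (i : ℝ) ^ (3 / 2 : ℝ)), ?_⟩⟩
  rintro _ ⟨n, rfl⟩
  rw [SSum]
  refine le_trans (Finset.sum_le_sum fun i hi => hb i (Finset.mem_Icc.1 hi).1) ?_
  exact hs.sum_le_tsum _ (fun i _ => by positivity)

lemma rpow_three_half (i : ℕ) : (i : ℝ) ^ (3 / 2 : ℝ) = i * √(i : ℝ) := by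
  rw [Real.sqrt_eq_rpow, ← Real.rpow_one_add' (by positivity) (by norm_num)]
  norm_num

lemma suff1 {a x t} (h : Pos ((a, x) :: t)) (hG : Good ((a, x) :: t) 1) (hx1 : x < 1) :
    ∃ L : ℝ, Tendsto (SSum ((a, x) :: t)) atTop (nhds L) := by
  obtain ⟨ha, hx⟩ := h.head
  obtain ⟨C, hC, hU⟩ := upper' t h.tail (1 / x) (by rw [lt_div_iff₀ hx]; linarith) (hG.tail hx)
  refine conv_of_bound h C fun i hi => ?_
  have hi0 : (1 : ℝ) ≤ i := by exact_mod_cast hi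
  have hs : 0 < √(i : ℝ) := Real.sqrt_pos.2 (by linarith)
  calc _ ≤ x ^ i / (i : ℝ) ^ 1 * (C * (1 / x) ^ i / √(i : ℝ)) := by
        gcongr
        · exact nonneg t h.tail i
        · exact ha
        · exact hU i hi
    _ = _ := by
        rw [rpow_three_half, div_pow, one_pow]
        field_simp

lemma suff2 {a x t} (h : Pos ((a, x) :: t)) (hG : Good ((a, x) :: t) 1) (hx1 : x = 1)
    (ha1 : 1 < a) :
    ∃ L : ℝ, Tendsto (SSum ((a, x) :: t)) atTop (nhds L) := by
  obtain ⟨ha, hx⟩ := h.head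
  obtain ⟨C, hC, hU⟩ := upper t h.tail
  refine conv_of_bound h C fun i hi => ?_
  have hi0 : (1 : ℝ) ≤ i := by exact_mod_cast hi
  have hs : 0 < √(i : ℝ) := Real.sqrt_pos.2 (by linarith)
  have hs2 : √(i : ℝ) * √(i : ℝ) = i := Real.mul_self_sqrt (by linarith)
  calc _ ≤ x ^ i / (i : ℝ) ^ 2 * (C * (1 / x) ^ i * √(i : ℝ)) := by
        gcongr
        · exact nonneg t h.tail i
        · exact ha1
        · exact hU _ (hG.tail hx) i hi
    _ = C * (1 / (i * √(i : ℝ))) := by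
        rw [hx1]
        have : (i : ℝ) ^ 2 = i * (√(i : ℝ) * √(i : ℝ)) := by rw [hs2]; ring
        rw [this]
        simp
        field_simp
        rw [sq, hs2]
    _ = _ := by rw [rpow_three_half]

lemma nec1 {t} (h : Pos t) {L : ℝ} (hL : Tendsto (SSum t) atTop (nhds L)) : Good t 1 := by
  intro j
  obtain ⟨c, hc, A, hA⟩ := lower t h j
  have hle : ∀ n, SSum t n ≤ L := fun n => (mono t h).ge_of_tendsto hL n
  by_contra! hp
  set p := ((t.map Prod.snd).take j).prod
  have h1 := (tendsto_pow_const_div_const_pow_of_one_lt A hp).const_mul L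
  rw [mul_zero] at h1
  refine absurd (ge_of_tendsto h1 (b := c) ?_) (not_le.2 hc)
  filter_upwards [eventually_ge_atTop 1] with n hn
  have h2 := (hA n hn).trans (hle n)
  have hn0 : (0 : ℝ) < n := by exact_mod_cast hn
  have hp0 : 0 < p := by linarith
  rw [div_le_iff₀ (by positivity)] at h2
  rw [← mul_div_assoc, le_div_iff₀ (by positivity)]
  exact h2

lemma nec2 {a x t} (h : Pos ((a, x) :: t)) {L : ℝ}
    (hL : Tendsto (SSum ((a, x) :: t)) atTop (nhds L)) (hx1 : x = 1) : 1 < a := by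
  by_contra! ha1
  have ha : a = 1 := le_antisymm ha1 h.head.1
  subst ha hx1
  have hle : ∀ n, SSum ((1, 1) :: t) n ≤ L := fun n => (mono _ h).ge_of_tendsto hL n
  have hc := one_pos t h.tail
  have hns : ¬ Summable fun i : ℕ => SSum t 1 * (1 / (i : ℝ)) := by
    rw [summable_mul_left_iff hc.ne']
    exact Real.not_summable_one_div_natCast
  refine hns (summable_of_sum_range_le (c := L) (fun i => by positivity) fun n => ?_)
  refine le_trans ?_ (hle n)
  rw [SSum]
  have : ∑ i ∈ Finset.range n, SSum t 1 * (1 / (i : ℝ)) ≤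
      ∑ i ∈ Finset.Icc 1 n, SSum t 1 * (1 / (i : ℝ)) := by
    have e : ∑ i ∈ Finset.range n, SSum t 1 * (1 / (i : ℝ)) =
        ∑ i ∈ (Finset.range n).filter (fun i => i ≠ 0), SSum t 1 * (1 / (i : ℝ)) := by
      rw [Finset.sum_filter_of_ne]
      rintro i _ hne rfl
      simp at hne
    rw [e]
    refine Finset.sum_le_sum_of_subset_of_nonneg ?_ fun i _ _ => by positivity
    intro i hi
    simp at hi ⊢
    omega
  refine this.trans (Finset.sum_le_sum fun i hi => ?_)
  have := mono t h.tail (Finset.mem_Icc.1 hi).1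
  have hi0 : (0 : ℝ) ≤ 1 / i := by positivity
  simp only [one_pow, pow_one]
  nlinarith

lemma crit {a x t} (h : Pos ((a, x) :: t)) :
    (∃ L : ℝ, Tendsto (SSum ((a, x) :: t)) atTop (nhds L)) ↔
      Good ((a, x) :: t) 1 ∧ (x < 1 ∨ (1 < a ∧ x = 1)) := by
  constructor
  · rintro ⟨L, hL⟩
    have hG := nec1 h hL
    refine ⟨hG, ?_⟩
    have h1 := hG 1
    simp at h1
    rcases h1.lt_or_eq with h1 | h1
    · exact Or.inl h1
    · exact Or.inr ⟨nec2 h hL h1, h1⟩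
  · rintro ⟨hG, h1 | ⟨h1, h2⟩⟩
    · exact suff1 h hG h1
    · exact suff2 h hG h2 h1

lemma good_ofFn (k : ℕ) (a : Fin (k + 1) → ℕ) (x : Fin (k + 1) → ℝ) :
    Good (List.ofFn fun i => (a i, |x i|)) 1 ↔
      ∀ j : Fin (k + 1), |∏ i ∈ Finset.Iic j, x i| ≤ 1 := by
  have key : ∀ j : Fin (k + 1), (((List.ofFn fun i => (a i, |x i|)).map Prod.snd).take
      (j.val + 1)).prod = |∏ i ∈ Finset.Iic j, x i| := by
    intro j
    rw [List.map_ofFn, List.prod_take_ofFn, Finset.abs_prod]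
    refine Finset.prod_congr ?_ fun i _ => rfl
    ext i
    simp only [Finset.mem_filter, Finset.mem_univ, true_and, Finset.mem_Iic, Fin.le_def]
    omega
  constructor
  · intro h j
    rw [← key]
    exact h _
  · intro h j
    rcases j with _ | j
    · simp
    by_cases hj : j < k + 1
    · have := h ⟨j, hj⟩
      rwa [← key] at this
    · have := h ⟨k, by omega⟩
      rw [← key] at this
      rw [List.take_of_length_le (by simp)] at this
      rw [List.take_of_length_le (by simp; omega)]
      exact this

end SSumAux

/-- Absolute convergence criterion for S-sums of depth `k + 1 ≥ 1`:
`S_{a₀,…,a_k}(x₀,…,x_k; n)` is absolutely convergent as `n → ∞` iff either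
`|x₀| < 1` and all prefix products `|x₀⋯x_j| ≤ 1`, or `a₀ > 1`, `|x₀| = 1`
and all products `|x₁⋯x_j| ≤ 1`. -/
theorem SSum_abs_convergence_criterion (k : ℕ)
    (a : Fin (k + 1) → ℕ) (x : Fin (k + 1) → ℝ)
    (ha : ∀ i, 0 < a i) (hx : ∀ i, x i ≠ 0) :
    (∃ L : ℝ, Tendsto (fun n => SSum (List.ofFn fun i => (a i, |x i|)) n)
        atTop (nhds L)) ↔
      ((|x 0| < 1 ∧ ∀ j : Fin (k + 1), |∏ i ∈ Finset.Iic j, x i| ≤ 1) ∨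
        (1 < a 0 ∧ |x 0| = 1 ∧
          ∀ j : Fin (k + 1), |∏ i ∈ Finset.Ioc 0 j, x i| ≤ 1)) := by
  have hpos : SSumAux.Pos (List.ofFn fun i => (a i, |x i|)) := by
    intro p hp
    obtain ⟨i, rfl⟩ := (List.mem_ofFn' _ _).1 hp
    exact ⟨ha i, abs_pos.2 (hx i)⟩
  have hgood := SSumAux.good_ofFn k a x
  have hprod : ∀ j : Fin (k + 1),
      |∏ i ∈ Finset.Iic j, x i| = |x 0| * |∏ i ∈ Finset.Ioc 0 j, x i| := by
    intro j
    have : Finset.Iic j = insert 0 (Finset.Ioc 0 j) := by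
      ext i
      simp only [Finset.mem_Iic, Finset.mem_insert, Finset.mem_Ioc]
      constructor
      · intro h
        rcases eq_or_ne i 0 with h0 | h0
        · exact Or.inl h0
        · exact Or.inr ⟨Fin.pos_iff_ne_zero.2 h0, h⟩
      · rintro (h | h)
        · rw [h]; exact Fin.zero_le j
        · exact h.2
    rw [this, Finset.prod_insert (by simp), abs_mul]
  rw [List.ofFn_succ] at hpos hgood ⊢
  have hc := SSumAux.crit hpos
  rw [hgood] at hc
  refine hc.trans ?_
  constructor
  · rintro ⟨h, h1 | ⟨h1, h2⟩⟩
    · exact Or.inl ⟨h1, h⟩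
    · refine Or.inr ⟨h1, h2, fun j => ?_⟩
      have := h j
      rwa [hprod, h2, one_mul] at this
  · rintro (⟨h1, h⟩ | ⟨h1, h2, h⟩)
    · exact ⟨h, Or.inl h1⟩
    · refine ⟨fun j => ?_, Or.inr ⟨h1, h2⟩⟩
      rw [hprod, h2, one_mul]
      exact h j
end

section
/- Conditional convergence criterion for S-sums: let k ≥ 1, let a_1,…,a_k be positive integers and x_1,…,x_k nonzero reals. The S-sum S_{a_1,…,a_k}(x_1,…,x_k; n) is convergent but not absolutely convergent as n → ∞ if and only if a_1 = 1, x_1 = −1, and |x_2| ≤ 1, |x_2 x_3| ≤ 1, …, |x_2 x_3 ⋯ x_k| ≤ 1. -/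
open Filter

namespace SS

open Finset Topology

noncomputable def U : List (ℕ × ℝ) → ℕ → ℝ
  | [], i => if i = 0 then 1 else 0
  | (a, x) :: t, i => x ^ (i + 1) / ((i : ℝ) + 1) ^ a * ∑ l ∈ range (i + 1), U t l

theorem SSum_succ (L : List (ℕ × ℝ)) (n : ℕ) : SSum L (n + 1) = ∑ l ∈ range (n + 1), U L l := by
  induction L generalizing n with
  | nil => simp [SSum, U]
  | cons p t ih =>
    obtain ⟨a, x⟩ := p
    rw [SSum, ← Finset.Ico_add_one_right_eq_Icc, Finset.sum_Ico_eq_sum_range]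
    simp only [Nat.add_sub_cancel]
    refine Finset.sum_congr rfl fun i _ => ?_
    rw [add_comm 1 i, ih]
    simp [U]

theorem SSum_zero (p) (t : List (ℕ × ℝ)) : SSum (p :: t) 0 = 0 := by
  obtain ⟨a, x⟩ := p
  simp [SSum]

/-- all products `r`, `r x₁`, `r x₁ x₂`... have absolute value at most one -/
def Ple : List (ℕ × ℝ) → ℝ → Prop
  | [], r => |r| ≤ 1
  | (_, x) :: t, r => |r| ≤ 1 ∧ Ple t (r * x)

/-- all products `r x₁`, `r x₁ x₂`... have absolute value less than one -/
def Plt : List (ℕ × ℝ) → ℝ → Prop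
  | [], _ => True
  | (_, x) :: t, r => |r * x| < 1 ∧ Plt t (r * x)

theorem Ple.abs_le {t r} (h : Ple t r) : |r| ≤ 1 := by
  cases t with
  | nil => exact h
  | cons p t => exact h.1

theorem Ple.mono {t} {r s : ℝ} (h : Ple t r) (hs : |s| ≤ |r|) : Ple t s := by
  induction t generalizing r s with
  | nil => exact hs.trans h
  | cons p t ih =>
    refine ⟨hs.trans h.1, ih h.2 ?_⟩
    rw [abs_mul, abs_mul]; gcongr

theorem Plt.mono {t} {r s : ℝ} (h : Plt t r) (hs : |s| ≤ |r|) : Plt t s := by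
  induction t generalizing r s with
  | nil => trivial
  | cons p t ih =>
    have : |s * p.2| ≤ |r * p.2| := by rw [abs_mul, abs_mul]; gcongr
    exact ⟨this.trans_lt h.1, ih h.2 this⟩

theorem Ple.lt {t} {r s : ℝ} (h : Ple t r) (hs : |s| < |r|) (hx : ∀ p ∈ t, p.2 ≠ 0) : Plt t s := by
  induction t generalizing r s with
  | nil => trivial
  | cons p t ih =>
    have h0 : 0 < |p.2| := abs_pos.mpr (hx p (by simp))
    have : |s * p.2| < |r * p.2| := by rw [abs_mul, abs_mul]; gcongr
    exact ⟨this.trans_le h.2.abs_le, ih h.2 this fun q hq => hx q (by simp [hq])⟩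

/-- averaging -/
theorem avg (u : ℕ → ℝ) (c w : ℝ)
    (h : ∀ s ∈ Set.Icc (0 : ℝ) 1, Summable (fun i => |u i * (s * w) ^ i|) ∧
      c ≤ ∑' i, u i * (s * w) ^ i) :
    Summable (fun i => |u i / ((i : ℝ) + 1) * w ^ i|) ∧
      c ≤ ∑' i, u i / ((i : ℝ) + 1) * w ^ i := by
  have h1 : Summable (fun i => |u i * w ^ i|) := by simpa using (h 1 (by simp)).1
  refine ⟨h1.of_nonneg_of_le (fun _ => abs_nonneg _) fun i => ?_, ?_⟩
  · rw [div_mul_eq_mul_div, abs_div]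
    apply div_le_self (abs_nonneg _)
    rw [abs_of_nonneg (by positivity)]; simp
  · have key : ∀ i (s : ℝ), s ∈ Set.Icc (0 : ℝ) 1 → ‖u i * (s * w) ^ i‖ ≤ |u i * w ^ i| := by
      intro i s hs
      rw [Real.norm_eq_abs, mul_pow, abs_mul, abs_mul, abs_mul, abs_pow s, abs_of_nonneg hs.1]
      gcongr
      exact mul_le_of_le_one_left (abs_nonneg _) (pow_le_one₀ hs.1 hs.2)
    have hcont : ContinuousOn (fun s : ℝ => ∑' i, u i * (s * w) ^ i) (Set.Icc 0 1) := by
      refine continuousOn_tsum (fun i => by fun_prop) h1 key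
    have hs : HasSum (fun i => ∫ s in (0 : ℝ)..1, u i * (s * w) ^ i)
        (∫ s in (0 : ℝ)..1, ∑' i, u i * (s * w) ^ i) := by
      refine intervalIntegral.hasSum_integral_of_dominated_convergence
        (fun i _ => |u i * w ^ i|) (fun i => ?_) (fun i => ?_) ?_ ?_ ?_
      · exact Continuous.aestronglyMeasurable (by fun_prop)
      · refine Filter.Eventually.of_forall fun s hs => key i s ?_
        rw [Set.uIoc_of_le zero_le_one] at hs
        exact ⟨hs.1.le, hs.2⟩
      · exact Filter.Eventually.of_forall fun s hs => h1
      · exact intervalIntegrable_const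
      · refine Filter.Eventually.of_forall fun s hs => ?_
        rw [Set.uIoc_of_le zero_le_one] at hs
        exact (h s ⟨hs.1.le, hs.2⟩).1.of_abs.hasSum
    have e : ∀ i, ∫ s in (0 : ℝ)..1, u i * (s * w) ^ i = u i / ((i : ℝ) + 1) * w ^ i := by
      intro i
      simp only [mul_pow]
      rw [intervalIntegral.integral_const_mul, intervalIntegral.integral_mul_const, integral_pow]
      simp; ring
    simp only [e] at hs
    rw [hs.tsum_eq]
    calc c = ∫ s in (0 : ℝ)..1, c := by simp
      _ ≤ _ := by
        apply intervalIntegral.integral_mono_on zero_le_one intervalIntegrable_const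
        · exact ContinuousOn.intervalIntegrable_of_Icc zero_le_one hcont
        · exact fun s hs => (h s hs).2

theorem avg_pow (u : ℕ → ℝ) (c w : ℝ) (a : ℕ)
    (h : ∀ s ∈ Set.Icc (0 : ℝ) 1, Summable (fun i => |u i * (s * w) ^ i|) ∧
      c ≤ ∑' i, u i * (s * w) ^ i) :
    Summable (fun i => |u i / ((i : ℝ) + 1) ^ a * w ^ i|) ∧
      c ≤ ∑' i, u i / ((i : ℝ) + 1) ^ a * w ^ i := by
  induction a generalizing w with
  | zero => simpa using h 1 (by simp)
  | succ a ih =>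
    have := avg (fun i => u i / ((i : ℝ) + 1) ^ a) c w (fun s hs => ih (s * w) ?_)
    · simpa only [div_div, ← pow_succ] using this
    · intro s' hs'
      have := h (s' * s) ⟨mul_nonneg hs'.1 hs.1, mul_le_one₀ hs'.2 hs.1 hs.2⟩
      simpa only [mul_assoc] using this

/-- partial sums -/
theorem psum (u : ℕ → ℝ) (w : ℝ) (hw : |w| < 1) (h : Summable (fun i => |u i * w ^ i|)) :
    Summable (fun i => |(∑ l ∈ range (i + 1), u l) * w ^ i|) ∧
      ∑' i, (∑ l ∈ range (i + 1), u l) * w ^ i = (∑' i, u i * w ^ i) * (1 - w)⁻¹ := by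
  have e : ∀ i, (∑ l ∈ range (i + 1), u l) * w ^ i =
      ∑ l ∈ range (i + 1), (u l * w ^ l) * w ^ (i - l) := by
    intro i
    rw [Finset.sum_mul]
    refine Finset.sum_congr rfl fun l hl => ?_
    rw [mul_assoc, ← pow_add]
    congr 2
    have := Finset.mem_range.mp hl
    omega
  have hg : Summable (fun i => ‖w ^ i‖) := by
    simpa [norm_pow] using summable_geometric_of_lt_one (abs_nonneg w) hw
  simp only [e]
  refine ⟨summable_norm_sum_mul_range_of_summable_norm (f := fun i => u i * w ^ i)
    (g := fun i => w ^ i) h hg, ?_⟩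
  rw [← tsum_geometric_of_norm_lt_one (ξ := w) hw]
  exact (tsum_mul_tsum_eq_tsum_sum_range_of_summable_norm (f := fun i => u i * w ^ i)
    (g := fun i => w ^ i) h hg).symm

def pr : List (ℕ × ℝ) → ℝ
  | [] => 1
  | (_, x) :: t => x * pr t

theorem pos (L : List (ℕ × ℝ)) (hx : ∀ p ∈ L, p.2 ≠ 0) :
    ∃ c > 0, ∀ w, Plt L w → Summable (fun i => |U L i * w ^ i|) ∧
      c ≤ pr L * ∑' i, U L i * w ^ i := by
  induction L with
  | nil =>
    refine ⟨1, one_pos, fun w _ => ?_⟩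
    have : ∀ i, U [] i * w ^ i = if i = 0 then 1 else 0 := by
      intro i; by_cases h : i = 0 <;> simp [U, h]
    have h2 : HasSum (fun i => U [] i * w ^ i) 1 := by
      simp only [this]; exact hasSum_ite_eq 0 1
    exact ⟨h2.summable.abs, by rw [h2.tsum_eq]; simp [pr]⟩
  | cons p t ih =>
    obtain ⟨a, x⟩ := p
    obtain ⟨c, hc, H⟩ := ih fun q hq => hx q (by simp [hq])
    have hx0 : x ≠ 0 := hx (a, x) (by simp)
    refine ⟨x ^ 2 * (c / 2), by positivity, fun w hw => ?_⟩
    have key := avg_pow (fun i => pr t * ∑ l ∈ range (i + 1), U t l) (c / 2) (w * x) a ?_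
    · have e : ∀ i, pr ((a, x) :: t) * (U ((a, x) :: t) i * w ^ i) = x ^ 2 *
        ((pr t * ∑ l ∈ range (i + 1), U t l) / ((i : ℝ) + 1) ^ a * (w * x) ^ i) := by
        intro i
        simp only [pr, U]
        field_simp
        ring
      have hp : pr ((a, x) :: t) ≠ 0 := by
        have : ∀ L : List (ℕ × ℝ), (∀ p ∈ L, p.2 ≠ 0) → pr L ≠ 0 := by
          intro L; induction L with
          | nil => simp [pr]
          | cons p t ih =>
            intro h; exact mul_ne_zero (h p (by simp)) (ih fun q hq => h q (by simp [hq]))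
        exact this _ hx
      have s1 := key.1.of_abs.mul_left (x ^ 2)
      simp only [← e] at s1
      rw [summable_mul_left_iff hp] at s1
      refine ⟨s1.abs, ?_⟩
      rw [← tsum_mul_left]
      simp only [e]
      rw [tsum_mul_left]
      exact mul_le_mul_of_nonneg_left key.2 (sq_nonneg x)
    · intro s hs
      have hle : |s * (w * x)| ≤ |w * x| := by
        rw [abs_mul, abs_of_nonneg hs.1]; exact mul_le_of_le_one_left (abs_nonneg _) hs.2
      have hlt := hle.trans_lt hw.1
      obtain ⟨h1, h2⟩ := H _ (hw.2.mono hle)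
      obtain ⟨h3, h4⟩ := psum _ _ hlt h1
      constructor
      · simp only [mul_assoc]
        exact (h3.of_abs.mul_left _).abs
      · simp only [mul_assoc] at h4 h2 ⊢
        rw [tsum_mul_left, h4, ← mul_assoc, div_eq_mul_inv]
        have := abs_lt.mp hlt
        gcongr
        · linarith
        · linarith
        · linarith

theorem tendsto_U {p} {t : List (ℕ × ℝ)} {A : ℝ} :
    Tendsto (fun n => SSum (p :: t) n) atTop (nhds A) ↔
      Tendsto (fun n => ∑ i ∈ range n, U (p :: t) i) atTop (nhds A) := by
  have : (fun n => SSum (p :: t) n) = (fun n => ∑ i ∈ range n, U (p :: t) i) := by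
    funext n
    cases n with
    | zero => simp [SSum_zero]
    | succ n => exact SSum_succ _ _
  rw [this]

theorem one_div (t : List (ℕ × ℝ)) (hx : ∀ p ∈ t, p.2 ≠ 0) (ht : Ple t 1) (A : ℝ)
    (h : Tendsto (fun n => SSum ((1, 1) :: t) n) atTop (nhds A)) : False := by
  obtain ⟨c, hc, H⟩ := pos t hx
  rw [tendsto_U] at h
  have h' := h.const_mul (pr t)
  simp only [Finset.mul_sum] at h'
  have abel := Real.tendsto_tsum_powerSeries_nhdsWithin_lt h'
  have lower : ∀ w ∈ Set.Ioo (0 : ℝ) 1, ∀ N, c * ∑ i ∈ range N, w ^ i / ((i : ℝ) + 1) ≤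
      ∑' i, pr t * U ((1, 1) :: t) i * w ^ i := by
    intro w hw N
    have hwabs : |w| < 1 := by rw [abs_of_pos hw.1]; exact hw.2
    have gs : ∀ s ∈ Set.Icc (0 : ℝ) 1, |s * w| < 1 := by
      intro s hs
      rw [abs_mul, abs_of_nonneg hs.1]
      exact (mul_le_of_le_one_left (abs_nonneg _) hs.2).trans_lt hwabs
    have a1 := avg (fun i => pr t * ∑ l ∈ range (i + 1), U t l - c) 0 w (by
      intro s hs
      have hlt := gs s hs
      obtain ⟨h1, h2⟩ := H (s * w) (ht.lt (by simpa using hlt) hx)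
      obtain ⟨h3, h4⟩ := psum _ _ hlt h1
      have g := summable_geometric_of_norm_lt_one (x := s * w) hlt
      have e1 : HasSum (fun i => (pr t * ∑ l ∈ range (i + 1), U t l - c) * (s * w) ^ i)
          (pr t * ((∑' i, U t i * (s * w) ^ i) * (1 - s * w)⁻¹) - c * (1 - s * w)⁻¹) := by
        have := (h3.of_abs.hasSum.mul_left (pr t)).sub (g.hasSum.mul_left c)
        rw [h4, tsum_geometric_of_norm_lt_one hlt] at this
        convert! this using 1
        funext i
        ring
      refine ⟨e1.summable.abs, ?_⟩
      rw [e1.tsum_eq, ← mul_assoc, ← sub_mul]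
      have := abs_lt.mp hlt
      exact mul_nonneg (by linarith) (inv_nonneg.mpr (by linarith)))
    have a2 : Summable (fun i : ℕ => w ^ i / ((i : ℝ) + 1)) := by
      refine (summable_geometric_of_lt_one hw.1.le hw.2).of_nonneg_of_le
        (fun i => div_nonneg (pow_nonneg hw.1.le _) (by positivity)) fun i => ?_
      exact div_le_self (pow_nonneg hw.1.le _) (by simp)
    have e : ∀ i : ℕ, pr t * U ((1, 1) :: t) i * w ^ i =
        (pr t * ∑ l ∈ range (i + 1), U t l - c) / ((i : ℝ) + 1) * w ^ i +
          c * (w ^ i / ((i : ℝ) + 1)) := by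
      intro i; simp only [U]; ring
    simp only [e]
    rw [(a1.1.of_abs).tsum_add (a2.mul_left c), tsum_mul_left]
    have : ∑ i ∈ range N, w ^ i / ((i : ℝ) + 1) ≤ ∑' i : ℕ, w ^ i / ((i : ℝ) + 1) :=
      a2.sum_le_tsum _ fun i _ => div_nonneg (pow_nonneg hw.1.le _) (by positivity)
    have := mul_le_mul_of_nonneg_left this hc.le
    linarith [a1.2]
  have fin : ∀ N, c * ∑ i ∈ range N, 1 / ((i : ℝ) + 1) ≤ pr t * A := by
    intro N
    have l1 : Tendsto (fun w : ℝ => c * ∑ i ∈ range N, w ^ i / ((i : ℝ) + 1)) (𝓝[<] 1)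
        (𝓝 (c * ∑ i ∈ range N, 1 / ((i : ℝ) + 1))) := by
      have : Continuous (fun w : ℝ => c * ∑ i ∈ range N, w ^ i / ((i : ℝ) + 1)) := by fun_prop
      have := (this.tendsto 1).mono_left (nhdsWithin_le_nhds (s := Set.Iio 1))
      simpa using this
    refine le_of_tendsto_of_tendsto l1 abel ?_
    filter_upwards [Ioo_mem_nhdsLT (zero_lt_one' ℝ)] with w hw using lower w hw N
  have t1 := Real.tendsto_sum_range_one_div_nat_succ_atTop.const_mul_atTop hc
  obtain ⟨N, hN⟩ := (t1.eventually_gt_atTop (pr t * A)).exists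
  exact absurd (fin N) (not_le.mpr hN)

theorem pow_lim (r : ℝ) (hr : 1 < |r|) (C : ℝ) (b : ℕ) :
    Tendsto (fun n : ℕ => C * (n : ℝ) ^ b / |r| ^ n) atTop (𝓝 0) := by
  have := (tendsto_pow_const_div_const_pow_of_one_lt b hr).const_mul C
  simpa [mul_div_assoc] using this

theorem growth (t : List (ℕ × ℝ)) (hx : ∀ p ∈ t, p.2 ≠ 0) (r C : ℝ) (b : ℕ)
    (h : ∀ n, 1 ≤ n → |r ^ n * SSum t n| ≤ C * (n : ℝ) ^ b) : Ple t r := by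
  induction t generalizing r C b with
  | nil =>
    by_contra hr
    have hr : 1 < |r| := by simpa [Ple] using hr
    obtain ⟨n, hn, hn1⟩ := (((pow_lim r hr C b).eventually_lt_const one_pos).and
      (eventually_ge_atTop 1)).exists
    have := h n hn1
    rw [div_lt_one (by positivity)] at hn
    simp [SSum] at this
    linarith
  | cons p t ih =>
    obtain ⟨a, x⟩ := p
    have hC : 0 ≤ C := by simpa using (abs_nonneg _).trans (h 1 le_rfl)
    have h0 : ∀ n, |r ^ n * SSum ((a, x) :: t) n| ≤ C * (n : ℝ) ^ b := by
      intro n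
      rcases Nat.eq_zero_or_pos n with rfl | hn
      · rw [SSum_zero]; simp; positivity
      · exact h n hn
    have h1 : Ple t (r * x) := by
      refine ih (fun q hq => hx q (by simp [hq])) _ ((1 + |r|) * C) (b + a) fun n hn => ?_
      obtain ⟨m, rfl⟩ : ∃ m, n = m + 1 := ⟨n - 1, by omega⟩
      have e : (r * x) ^ (m + 1) * SSum t (m + 1) = ((m + 1 : ℕ) : ℝ) ^ a *
          (r ^ (m + 1) * SSum ((a, x) :: t) (m + 1) - r * (r ^ m * SSum ((a, x) :: t) m)) := by
        have : SSum ((a, x) :: t) (m + 1) = SSum ((a, x) :: t) m +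
            x ^ (m + 1) / ((m + 1 : ℕ) : ℝ) ^ a * SSum t (m + 1) := by
          rw [SSum, SSum, Finset.sum_Icc_succ_top (by omega)]
        rw [this]
        have : ((m + 1 : ℕ) : ℝ) ^ a ≠ 0 := by positivity
        field_simp
        ring
      have b1 := h0 (m + 1)
      have b2 : |r ^ m * SSum ((a, x) :: t) m| ≤ C * ((m + 1 : ℕ) : ℝ) ^ b := by
        refine (h0 m).trans ?_
        gcongr; omega
      rw [e, abs_mul, abs_of_nonneg (by positivity)]
      calc _ ≤ ((m + 1 : ℕ) : ℝ) ^ a * (C * ((m + 1 : ℕ) : ℝ) ^ b +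
            |r| * (C * ((m + 1 : ℕ) : ℝ) ^ b)) := by
            gcongr
            refine (abs_sub _ _).trans ?_
            rw [abs_mul r]
            gcongr
        _ = _ := by rw [pow_add]; ring
    refine ⟨?_, h1⟩
    by_contra hr
    rw [not_le] at hr
    have hp : Plt ((a, x) :: t) 1 := by
      have hx0 : 0 < |x| := abs_pos.mpr (hx (a, x) (by simp))
      have : |1 * x| < |r * x| := by
        rw [one_mul, abs_mul]; exact lt_mul_of_one_lt_left hx0 hr
      exact ⟨this.trans_le h1.abs_le, h1.lt this fun q hq => hx q (by simp [hq])⟩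
    obtain ⟨c, hc, H⟩ := pos _ hx
    obtain ⟨s1, s2⟩ := H 1 hp
    simp only [one_pow, mul_one] at s1 s2
    have l1 := tendsto_U.mpr s1.of_abs.hasSum.tendsto_sum_nat
    have l2 : Tendsto (fun n => SSum ((a, x) :: t) n) atTop (𝓝 0) := by
      refine squeeze_zero_norm (fun n => ?_) (pow_lim r hr C b)
      rw [le_div_iff₀ (by positivity), Real.norm_eq_abs, ← abs_pow, ← abs_mul, mul_comm]
      exact h0 n
    have := tendsto_nhds_unique l1 l2
    rw [this] at s2
    simp at s2
    linarith

def absL (t : List (ℕ × ℝ)) : List (ℕ × ℝ) := t.map fun p => (p.1, |p.2|)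

theorem U_nonneg (t : List (ℕ × ℝ)) (hx : ∀ p ∈ t, 0 ≤ p.2) (i : ℕ) : 0 ≤ U t i := by
  induction t generalizing i with
  | nil => simp only [U]; split_ifs <;> simp
  | cons p t ih =>
    obtain ⟨a, x⟩ := p
    have : 0 ≤ x := hx (a, x) (by simp)
    have := Finset.sum_nonneg fun l (_ : l ∈ range (i + 1)) =>
      ih (fun q hq => hx q (by simp [hq])) l
    simp only [U]
    positivity

theorem abs_U (t : List (ℕ × ℝ)) (i : ℕ) : |U t i| ≤ U (absL t) i := by
  induction t generalizing i with
  | nil => simp only [absL, List.map_nil, U]; split_ifs <;> simp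
  | cons p t ih =>
    obtain ⟨a, x⟩ := p
    simp only [absL, List.map_cons, U] at ih ⊢
    rw [abs_mul, abs_div, abs_pow, abs_of_nonneg (show (0 : ℝ) ≤ ((i : ℝ) + 1) ^ a by positivity)]
    gcongr
    exact (Finset.abs_sum_le_sum_abs _ _).trans (Finset.sum_le_sum fun l _ => ih l)

theorem Ple_absL (t : List (ℕ × ℝ)) (r : ℝ) : Ple (absL t) |r| ↔ Ple t r := by
  induction t generalizing r with
  | nil => simp [absL, Ple]
  | cons p t ih =>
    simp only [absL, List.map_cons, Ple] at ih ⊢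
    rw [← abs_mul, ih, abs_abs]

theorem sum_sqrt (n : ℕ) : ∑ l ∈ range n, 1 / √((l : ℝ) + 1) ≤ 2 * √(n : ℝ) := by
  induction n with
  | zero => simp
  | succ n ih =>
    rw [Finset.sum_range_succ]
    have h1 : 0 < √((n : ℝ) + 1) := by positivity
    have h2 : 0 ≤ √(n : ℝ) := by positivity
    have e1 : √((n : ℝ) + 1) ^ 2 = n + 1 := Real.sq_sqrt (by positivity)
    have e2 : √(n : ℝ) ^ 2 = n := Real.sq_sqrt (by positivity)
    have : 1 / √((n : ℝ) + 1) ≤ 2 * √((n : ℝ) + 1) - 2 * √(n : ℝ) := by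
      rw [div_le_iff₀ h1]
      nlinarith [sq_nonneg (√((n : ℝ) + 1) - √(n : ℝ))]
    push_cast
    linarith

theorem T_of_U (u : ℕ → ℝ) (hu : ∀ i, 0 ≤ u i) (c K : ℝ) (hc : 0 ≤ c) (hc1 : c ≤ 1) (hK : 0 ≤ K)
    (h : ∀ i : ℕ, c ^ (i + 1) * u i ≤ K / √((i : ℝ) + 1)) (i : ℕ) :
    c ^ (i + 1) * ∑ l ∈ range (i + 1), u l ≤ 2 * K * √((i : ℝ) + 1) := by
  rw [Finset.mul_sum]
  calc _ ≤ ∑ l ∈ range (i + 1), K * (1 / √((l : ℝ) + 1)) := by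
        refine Finset.sum_le_sum fun l hl => ?_
        rw [mul_one_div]
        refine le_trans (mul_le_mul_of_nonneg_right ?_ (hu l)) (h l)
        exact pow_le_pow_of_le_one hc hc1 (by have := Finset.mem_range.mp hl; omega)
    _ ≤ K * (2 * √((i + 1 : ℕ) : ℝ)) := by
        rw [← Finset.mul_sum]
        exact mul_le_mul_of_nonneg_left (sum_sqrt _) hK
    _ = _ := by push_cast; ring

theorem U_bound (t : List (ℕ × ℝ)) (hx : ∀ p ∈ t, 0 ≤ p.2) (ha : ∀ p ∈ t, 0 < p.1)
    (c : ℝ) (hc : 0 ≤ c) (h : Ple t c) :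
    ∃ K ≥ 0, ∀ i : ℕ, c ^ (i + 1) * U t i ≤ K / √((i : ℝ) + 1) := by
  induction t generalizing c with
  | nil =>
    refine ⟨1, zero_le_one, fun i => ?_⟩
    have : c ≤ 1 := (le_abs_self c).trans h
    by_cases hi : i = 0
    · subst hi; simpa [U]
    · simp [U, hi]
  | cons p t ih =>
    obtain ⟨a, x⟩ := p
    have hx0 : 0 ≤ x := hx (a, x) (by simp)
    have ha0 : 0 < a := ha (a, x) (by simp)
    have hx' : ∀ p ∈ t, 0 ≤ p.2 := fun q hq => hx q (by simp [hq])
    have hcx : 0 ≤ c * x := mul_nonneg hc hx0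
    obtain ⟨K, hK, H⟩ := ih hx' (fun q hq => ha q (by simp [hq])) (c * x) hcx h.2
    have T := T_of_U (U t) (U_nonneg t hx') (c * x) K hcx ((le_abs_self _).trans h.2.abs_le) hK H
    refine ⟨2 * K, by positivity, fun i => ?_⟩
    have e : c ^ (i + 1) * U ((a, x) :: t) i =
        ((c * x) ^ (i + 1) * ∑ l ∈ range (i + 1), U t l) / ((i : ℝ) + 1) ^ a := by
      simp only [U]; ring
    rw [e]
    calc _ ≤ (2 * K * √((i : ℝ) + 1)) / ((i : ℝ) + 1) ^ 1 := by
          have := T i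
          gcongr
          · simp
          · exact ha0
      _ = _ := by
          have e1 : √((i : ℝ) + 1) ^ 2 = i + 1 := Real.sq_sqrt (by positivity)
          have : 0 < √((i : ℝ) + 1) := by positivity
          rw [pow_one, div_eq_div_iff (by positivity) (by positivity)]
          linear_combination (2 * K) * e1

theorem T_refined (u : ℕ → ℝ) (hu : ∀ i, 0 ≤ u i) (c K : ℝ) (hc : 0 ≤ c) (hc1 : c < 1)
    (hK : 0 ≤ K) (h : ∀ i : ℕ, c ^ (i + 1) * u i ≤ K / √((i : ℝ) + 1)) :
    ∃ K' ≥ 0, ∀ i : ℕ, c ^ (i + 1) * ∑ l ∈ range (i + 1), u l ≤ K' / √((i : ℝ) + 1) := by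
  have hs : Summable (fun m : ℕ => ((m : ℝ) + 1) * c ^ m) := by
    have h1 := summable_pow_mul_geometric_of_norm_lt_one 1 (r := c)
      (by rwa [Real.norm_eq_abs, abs_of_nonneg hc])
    have h2 := summable_geometric_of_lt_one hc hc1
    refine (h1.add h2).congr fun m => ?_
    ring
  have hnn : ∀ m : ℕ, 0 ≤ ((m : ℝ) + 1) * c ^ m := fun m => by positivity
  refine ⟨K * ∑' m : ℕ, ((m : ℝ) + 1) * c ^ m, mul_nonneg hK (tsum_nonneg hnn), fun i => ?_⟩
  have hi : 0 < √((i : ℝ) + 1) := by positivity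
  rw [le_div_iff₀ hi, Finset.mul_sum, Finset.sum_mul]
  calc _ ≤ ∑ l ∈ range (i + 1), K * ((((i + 1 - 1 - l : ℕ) : ℝ) + 1) * c ^ (i + 1 - 1 - l)) := by
        refine Finset.sum_le_sum fun l hl => ?_
        have hl : l ≤ i := by have := Finset.mem_range.mp hl; omega
        obtain ⟨m, rfl⟩ := Nat.exists_eq_add_of_le hl
        have e : l + m + 1 - 1 - l = m := by omega
        rw [e]
        have hl0 : 0 < √((l : ℝ) + 1) := by positivity
        have b1 := h l
        have b2 : √(((l + m : ℕ) : ℝ) + 1) ≤ ((m : ℝ) + 1) * √((l : ℝ) + 1) := by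
          rw [Real.sqrt_le_left (by positivity), mul_pow, Real.sq_sqrt (by positivity)]
          push_cast
          nlinarith [mul_nonneg (Nat.cast_nonneg (α := ℝ) l) (Nat.cast_nonneg (α := ℝ) m),
            mul_nonneg (mul_nonneg (Nat.cast_nonneg (α := ℝ) m) (Nat.cast_nonneg (α := ℝ) m))
            (Nat.cast_nonneg (α := ℝ) l)]
        calc c ^ (l + m + 1) * u l * √(((l + m : ℕ) : ℝ) + 1)
            = c ^ m * (c ^ (l + 1) * u l) * √(((l + m : ℕ) : ℝ) + 1) := by ring
          _ ≤ c ^ m * (K / √((l : ℝ) + 1)) * (((m : ℝ) + 1) * √((l : ℝ) + 1)) := by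
              have := hu l
              gcongr
          _ = _ := by field_simp
    _ = ∑ m ∈ range (i + 1), K * (((m : ℝ) + 1) * c ^ m) :=
        Finset.sum_range_reflect (fun m : ℕ => K * (((m : ℝ) + 1) * c ^ m)) (i + 1)
    _ ≤ _ := by
        rw [← Finset.mul_sum]
        exact mul_le_mul_of_nonneg_left (hs.sum_le_tsum _ fun m _ => hnn m) hK

theorem summable_three_halves :
    Summable (fun i : ℕ => 1 / (((i : ℝ) + 1) * √((i : ℝ) + 1))) := by
  have := (summable_nat_add_iff 1).mpr
    (Real.summable_one_div_nat_rpow (p := 3 / 2).mpr (by norm_num))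
  refine this.congr fun i => ?_
  push_cast
  have h : (0 : ℝ) < (i : ℝ) + 1 := by positivity
  rw [show (3 / 2 : ℝ) = 1 + 1 / 2 by norm_num, Real.rpow_add h, Real.rpow_one,
    Real.sqrt_eq_rpow]

theorem abs_conv (a : ℕ) (x : ℝ) (t : List (ℕ × ℝ)) (hx0 : 0 ≤ x) (ha0 : 0 < a)
    (hx : ∀ p ∈ t, 0 ≤ p.2) (ha : ∀ p ∈ t, 0 < p.1) (h : Ple t x) (h2 : x < 1 ∨ 2 ≤ a) :
    ∃ A, Tendsto (fun n => SSum ((a, x) :: t) n) atTop (nhds A) := by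
  suffices hs : Summable (U ((a, x) :: t)) from ⟨_, tendsto_U.mpr hs.hasSum.tendsto_sum_nat⟩
  have hU : ∀ i, 0 ≤ U ((a, x) :: t) i := by
    refine U_nonneg _ fun p hp => ?_
    rcases List.mem_cons.mp hp with rfl | hp
    · exact hx0
    · exact hx p hp
  obtain ⟨K, hK, H⟩ := U_bound t hx ha x hx0 h
  have e : ∀ i, U ((a, x) :: t) i =
      (x ^ (i + 1) * ∑ l ∈ range (i + 1), U t l) / ((i : ℝ) + 1) ^ a := by
    intro i; simp only [U]; ring
  rcases h2 with h2 | h2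
  · obtain ⟨K', hK', H'⟩ := T_refined (U t) (U_nonneg t hx) x K hx0 h2 hK H
    refine (summable_three_halves.mul_left K').of_nonneg_of_le hU fun i => ?_
    rw [e]
    calc _ ≤ (K' / √((i : ℝ) + 1)) / ((i : ℝ) + 1) ^ 1 := by
          have := H' i
          gcongr
          · simp
          · exact ha0
      _ = _ := by field_simp
  · have H' := T_of_U (U t) (U_nonneg t hx) x K hx0 ((le_abs_self _).trans h.abs_le) hK H
    refine (summable_three_halves.mul_left (2 * K)).of_nonneg_of_le hU fun i => ?_
    rw [e]
    calc _ ≤ (2 * K * √((i : ℝ) + 1)) / ((i : ℝ) + 1) ^ 2 := by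
          have := H' i
          gcongr
          simp
      _ = _ := by
          have e1 : √((i : ℝ) + 1) ^ 2 = i + 1 := Real.sq_sqrt (by positivity)
          have : 0 < √((i : ℝ) + 1) := by positivity
          rw [mul_one_div, div_eq_div_iff (by positivity) (by positivity)]
          linear_combination (2 * K * ((i : ℝ) + 1)) * e1

theorem alternating (b : ℕ → ℝ) (hb : Tendsto b atTop (𝓝 0))
    (hs : Summable fun i => |b (i + 1) - b i|) :
    ∃ A, Tendsto (fun n => ∑ i ∈ range n, (-1) ^ i * b i) atTop (𝓝 A) := by
  have hid : ∀ n, ∑ i ∈ range n, (-1) ^ i * b i = (1 / 2) * (b 0 - (-1) ^ n * b n -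
      ∑ i ∈ range n, (-1) ^ i * (b (i + 1) - b i)) := by
    intro n
    induction n with
    | zero => simp
    | succ n ih => rw [Finset.sum_range_succ, Finset.sum_range_succ, ih]; ring
  have s : Summable (fun i => (-1) ^ i * (b (i + 1) - b i)) := by
    refine Summable.of_abs (hs.congr fun i => ?_)
    simp [abs_mul]
  have hb' : Tendsto (fun n => (-1) ^ n * b n) atTop (𝓝 0) := by
    refine squeeze_zero_norm (fun n => ?_) (by simpa using hb.norm)
    simp [abs_mul]
  simp only [hid]
  exact ⟨_, ((hb'.const_sub _).sub s.hasSum.tendsto_sum_nat).const_mul _⟩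

theorem cond_conv (t : List (ℕ × ℝ)) (ha : ∀ p ∈ t, 0 < p.1) (h : Ple t 1) :
    ∃ A, Tendsto (fun n => SSum ((1, -1) :: t) n) atTop (nhds A) := by
  have hx' : ∀ p ∈ absL t, 0 ≤ p.2 := by
    intro p hp
    simp only [absL, List.mem_map] at hp
    obtain ⟨q, _, rfl⟩ := hp
    exact abs_nonneg _
  have ha' : ∀ p ∈ absL t, 0 < p.1 := by
    intro p hp
    simp only [absL, List.mem_map] at hp
    obtain ⟨q, hq, rfl⟩ := hp
    exact ha q hq
  have h' : Ple (absL t) 1 := by have := (Ple_absL t 1).mpr h; rwa [abs_one] at this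
  obtain ⟨K, hK, H⟩ := U_bound _ hx' ha' 1 zero_le_one h'
  have H2 := T_of_U _ (U_nonneg _ hx') 1 K zero_le_one le_rfl hK H
  simp only [one_pow, one_mul] at H H2
  have B1 : ∀ i : ℕ, |U t i| ≤ K / √((i : ℝ) + 1) := fun i => (abs_U t i).trans (H i)
  have B2 : ∀ i : ℕ, |∑ l ∈ range (i + 1), U t l| ≤ 2 * K * √((i : ℝ) + 1) := fun i =>
    ((Finset.abs_sum_le_sum_abs _ _).trans (Finset.sum_le_sum fun l _ => abs_U t l)).trans (H2 i)
  suffices key : _ ∧ _ by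
    obtain ⟨A, hA⟩ := alternating (fun i => (∑ l ∈ range (i + 1), U t l) / ((i : ℝ) + 1))
      key.1 key.2
    refine ⟨-A, tendsto_U.mpr ?_⟩
    refine hA.neg.congr fun n => ?_
    rw [← Finset.sum_neg_distrib]
    refine Finset.sum_congr rfl fun i _ => ?_
    simp only [U]
    ring
  constructor
  · have l : Tendsto (fun i : ℕ => 2 * K * (1 / √((i : ℝ) + 1))) atTop (𝓝 0) := by
      have h1 : Tendsto (fun i : ℕ => √((i : ℝ) + 1)) atTop atTop :=
        Real.tendsto_sqrt_atTop.comp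
          (tendsto_atTop_add_const_right _ _ tendsto_natCast_atTop_atTop)
      have := (h1.inv_tendsto_atTop).const_mul (2 * K)
      simpa using this
    refine squeeze_zero_norm (fun i => ?_) l
    rw [Real.norm_eq_abs, abs_div, abs_of_pos (show (0 : ℝ) < (i : ℝ) + 1 by positivity),
      div_le_iff₀ (by positivity)]
    refine (B2 i).trans (le_of_eq ?_)
    have e1 : √((i : ℝ) + 1) ^ 2 = i + 1 := Real.sq_sqrt (by positivity)
    have : 0 < √((i : ℝ) + 1) := by positivity
    field_simp
    rw [e1]
  · refine (summable_three_halves.mul_left (3 * K)).of_nonneg_of_le (fun _ => abs_nonneg _)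
      fun i => ?_
    have hi : (0 : ℝ) < (i : ℝ) + 1 := by positivity
    have e1 : √((i : ℝ) + 1) ^ 2 = i + 1 := Real.sq_sqrt (by positivity)
    have hs : 0 < √((i : ℝ) + 1) := by positivity
    have e : (∑ l ∈ range (i + 1 + 1), U t l) / (((i + 1 : ℕ) : ℝ) + 1) -
        (∑ l ∈ range (i + 1), U t l) / ((i : ℝ) + 1) =
        U t (i + 1) / (((i + 1 : ℕ) : ℝ) + 1) -
          (∑ l ∈ range (i + 1), U t l) / (((i : ℝ) + 1) * (((i + 1 : ℕ) : ℝ) + 1)) := by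
      rw [Finset.sum_range_succ]
      push_cast
      field_simp
      ring
    rw [e]
    refine (abs_sub _ _).trans ?_
    rw [abs_div, abs_div, abs_of_pos (show (0 : ℝ) < ((i + 1 : ℕ) : ℝ) + 1 by positivity),
      abs_of_pos (show (0 : ℝ) < ((i : ℝ) + 1) * (((i + 1 : ℕ) : ℝ) + 1) by positivity)]
    have c1 : |U t (i + 1)| / (((i + 1 : ℕ) : ℝ) + 1) ≤ (K / √((i : ℝ) + 1)) / ((i : ℝ) + 1) := by
      have : |U t (i + 1)| ≤ K / √((i : ℝ) + 1) := by
        refine (B1 (i + 1)).trans ?_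
        gcongr
        omega
      gcongr
      omega
    have c2 : |∑ l ∈ range (i + 1), U t l| / (((i : ℝ) + 1) * (((i + 1 : ℕ) : ℝ) + 1)) ≤
        (2 * K * √((i : ℝ) + 1)) / (((i : ℝ) + 1) * ((i : ℝ) + 1)) := by
      have := B2 i
      gcongr
      omega
    refine (add_le_add c1 c2).trans (le_of_eq ?_)
    have e3 : 2 * K * √((i : ℝ) + 1) / (((i : ℝ) + 1) * ((i : ℝ) + 1)) =
        2 * K * (1 / (((i : ℝ) + 1) * √((i : ℝ) + 1))) := by
      rw [mul_one_div, div_eq_div_iff (by positivity) (by positivity)]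
      linear_combination (2 * K * ((i : ℝ) + 1)) * e1
    rw [e3]
    field_simp
    ring

theorem Ple_ofFn (k : ℕ) (a : Fin (k + 1) → ℕ) (x : Fin (k + 1) → ℝ) (r : ℝ) :
    Ple (List.ofFn fun i : Fin k => (a i.succ, x i.succ)) r ↔
      ∀ j : Fin (k + 1), |r * ∏ i ∈ Finset.Ioc 0 j, x i| ≤ 1 := by
  induction k generalizing r with
  | zero => simp [Ple]
  | succ k ih =>
    rw [List.ofFn_succ]
    have := ih (fun i => a i.succ) (fun i => x i.succ) (r * x 1)
    simp only [Ple]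
    rw [Fin.forall_fin_succ]
    refine and_congr (by simp) (this.trans (forall_congr' fun j => ?_))
    have e : ∏ i ∈ Finset.Ioc 0 j.succ, x i = x 1 * ∏ i ∈ Finset.Ioc 0 j, x i.succ := by
      have f : ∀ (m : ℕ) (j : Fin (m + 1)) (y : Fin (m + 1) → ℝ), ∏ i ∈ Finset.Ioc 0 j, y i =
          ∏ i, if 0 < i ∧ i ≤ j then y i else 1 := by
        intro m j y
        rw [← Finset.prod_filter]
        congr 1
        ext i; simp
      rw [f, f, Fin.prod_univ_succ, Fin.prod_univ_succ, Fin.prod_univ_succ]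
      simp
    rw [e, mul_assoc]

theorem main (k : ℕ)
    (a : Fin (k + 1) → ℕ) (x : Fin (k + 1) → ℝ)
    (ha : ∀ i, 0 < a i) (hx : ∀ i, x i ≠ 0) :
    ((∃ L : ℝ, Tendsto (fun n => SSum (List.ofFn fun i => (a i, x i)) n)
        atTop (nhds L)) ∧
      ¬ (∃ L : ℝ, Tendsto (fun n => SSum (List.ofFn fun i => (a i, |x i|)) n)
          atTop (nhds L))) ↔
      (a 0 = 1 ∧ x 0 = -1 ∧
        ∀ j : Fin (k + 1), |∏ i ∈ Finset.Ioc 0 j, x i| ≤ 1) := by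
  have hP := Ple_ofFn k a x 1
  simp only [one_mul] at hP
  rw [← hP, List.ofFn_succ, List.ofFn_succ]
  set t := List.ofFn fun i : Fin k => (a i.succ, x i.succ) with ht
  have habs : (List.ofFn fun i : Fin k => (a i.succ, |x i.succ|)) = absL t := by
    rw [ht, absL, List.map_ofFn]; rfl
  rw [habs]
  have hxt : ∀ p ∈ t, p.2 ≠ 0 := by
    intro p hp
    obtain ⟨i, rfl⟩ := (List.mem_ofFn' _ _).mp hp
    exact hx _
  have hat : ∀ p ∈ t, 0 < p.1 := by
    intro p hp
    obtain ⟨i, rfl⟩ := (List.mem_ofFn' _ _).mp hp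
    exact ha _
  have hxa : ∀ p ∈ absL t, 0 < p.2 := by
    intro p hp
    simp only [absL, List.mem_map] at hp
    obtain ⟨q, hq, rfl⟩ := hp
    exact abs_pos.mpr (hxt q hq)
  have haa : ∀ p ∈ absL t, 0 < p.1 := by
    intro p hp
    simp only [absL, List.mem_map] at hp
    obtain ⟨q, hq, rfl⟩ := hp
    exact hat q hq
  constructor
  · rintro ⟨⟨A, hA⟩, hn⟩
    obtain ⟨C, hC⟩ := (Metric.isBounded_range_of_tendsto _ hA).exists_norm_le
    have hple : Ple ((a 0, x 0) :: t) 1 := by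
      refine growth _ ?_ 1 C 0 fun n _ => ?_
      · intro p hp
        rcases List.mem_cons.mp hp with rfl | hp
        · exact hx 0
        · exact hxt p hp
      · simpa using hC _ ⟨n, rfl⟩
    have h2 : Ple t (x 0) := by simpa using hple.2
    have h3 : Ple (absL t) |x 0| := (Ple_absL _ _).mpr h2
    have h4 : ¬ (|x 0| < 1 ∨ 2 ≤ a 0) := fun h => hn
      (abs_conv (a 0) |x 0| (absL t) (abs_nonneg _) (ha 0) (fun p hp => (hxa p hp).le) haa h3 h)
    push Not at h4
    have hx1 : |x 0| = 1 := le_antisymm h2.abs_le h4.1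
    have ha1 : a 0 = 1 := by have := ha 0; omega
    have ht1 : Ple t 1 := h2.mono (by simp [hx1])
    refine ⟨ha1, ?_, ht1⟩
    rcases eq_or_eq_neg_of_abs_eq hx1 with h | h
    · rw [ha1, h] at hA
      exact (one_div t hxt ht1 A hA).elim
    · exact h
  · rintro ⟨h1, h2, h3⟩
    rw [h1, h2]
    refine ⟨cond_conv t hat h3, ?_⟩
    rintro ⟨A, hA⟩
    rw [abs_neg, abs_one] at hA
    refine one_div (absL t) (fun p hp => (hxa p hp).ne') ?_ A hA
    have := (Ple_absL t 1).mpr h3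
    rwa [abs_one] at this

end SS

/-- Conditional convergence criterion for S-sums of depth `k + 1 ≥ 1`:
`S_{a₀,…,a_k}(x₀,…,x_k; n)` is convergent but not absolutely convergent as
`n → ∞` iff `a₀ = 1`, `x₀ = −1` and all products `|x₁⋯x_j| ≤ 1`. -/
theorem SSum_conditional_convergence_criterion (k : ℕ)
    (a : Fin (k + 1) → ℕ) (x : Fin (k + 1) → ℝ)
    (ha : ∀ i, 0 < a i) (hx : ∀ i, x i ≠ 0) :
    ((∃ L : ℝ, Tendsto (fun n => SSum (List.ofFn fun i => (a i, x i)) n)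
        atTop (nhds L)) ∧
      ¬ (∃ L : ℝ, Tendsto (fun n => SSum (List.ofFn fun i => (a i, |x i|)) n)
          atTop (nhds L))) ↔
      (a 0 = 1 ∧ x 0 = -1 ∧
        ∀ j : Fin (k + 1), |∏ i ∈ Finset.Ioc 0 j, x i| ≤ 1) := 
  SS.main k a x ha hx
end

section
/- Convergence criterion for cyclotomic harmonic sums: let p ≥ 1, let a_1,…,a_p be positive integers, b_1,…,b_p nonnegative integers, and c_1,…,c_p nonzero integers. The sequence n ↦ S_{(a_1,b_1,c_1),…,(a_p,b_p,c_p)}(n) converges to a finite limit as n → ∞ if and only if c_1 ≠ 1. -/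
open Filter

/-- Negated forward difference. -/
def nD (f : ℕ → ℝ) : ℕ → ℝ := fun i => f i - f (i + 1)

/-- Strict monotonicity of order `n`. -/
def PD : ℕ → (ℕ → ℝ) → Prop
  | 0, f => ∀ i, 0 < f i
  | n + 1, f => (∀ i, 0 < f i) ∧ PD n (nD f)

/-- Strictly completely monotone sequences. -/
def CM (f : ℕ → ℝ) : Prop := ∀ n, PD n f

lemma PD.pos {n : ℕ} {f : ℕ → ℝ} (h : PD n f) (i : ℕ) : 0 < f i := by
  cases n with
  | zero => exact h i
  | succ n => exact h.1 i

lemma PD.down {n : ℕ} : ∀ {f : ℕ → ℝ}, PD (n + 1) f → PD n f := by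
  induction n with
  | zero => intro f h; exact h.1
  | succ n ih => intro f h; exact ⟨h.1, ih h.2⟩

lemma PD.add {n : ℕ} : ∀ {f g : ℕ → ℝ}, PD n f → PD n g → PD n (fun i => f i + g i) := by
  induction n with
  | zero => intro f g hf hg i; exact add_pos (hf i) (hg i)
  | succ n ih =>
    intro f g hf hg
    refine ⟨fun i => add_pos (hf.1 i) (hg.1 i), ?_⟩
    have : nD (fun i => f i + g i) = fun i => nD f i + nD g i := by
      funext i; simp only [nD]; ring
    rw [this]; exact ih hf.2 hg.2

lemma PD.smul {n : ℕ} {a : ℝ} (ha : 0 < a) :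
    ∀ {f : ℕ → ℝ}, PD n f → PD n (fun i => a * f i) := by
  induction n with
  | zero => intro f hf i; exact mul_pos ha (hf i)
  | succ n ih =>
    intro f hf
    refine ⟨fun i => mul_pos ha (hf.1 i), ?_⟩
    have : nD (fun i => a * f i) = fun i => a * nD f i := by
      funext i; simp only [nD]; ring
    rw [this]; exact ih hf.2

lemma PD.shift {n : ℕ} : ∀ {f : ℕ → ℝ}, PD n f → PD n (fun i => f (i + 1)) := by
  induction n with
  | zero => intro f hf i; exact hf (i + 1)
  | succ n ih =>
    intro f hf
    exact ⟨fun i => hf.1 (i + 1), ih hf.2⟩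

lemma PD.mul {n : ℕ} : ∀ {f g : ℕ → ℝ}, PD n f → PD n g → PD n (fun i => f i * g i) := by
  induction n with
  | zero => intro f g hf hg i; exact mul_pos (hf i) (hg i)
  | succ n ih =>
    intro f g hf hg
    refine ⟨fun i => mul_pos (hf.1 i) (hg.1 i), ?_⟩
    have : nD (fun i => f i * g i) = fun i => nD f i * g i + f (i + 1) * nD g i := by
      funext i; simp only [nD]; ring
    rw [this]; exact (ih hf.2 hg.down).add (ih hf.down.shift hg.2)

lemma CM.nD {f : ℕ → ℝ} (h : CM f) : CM (nD f) := fun n => (h (n + 1)).2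

lemma CM.pos {f : ℕ → ℝ} (h : CM f) (i : ℕ) : 0 < f i := (h 0) i

lemma CM.mul {f g : ℕ → ℝ} (hf : CM f) (hg : CM g) : CM (fun i => f i * g i) :=
  fun n => (hf n).mul (hg n)

lemma CM.anti {f : ℕ → ℝ} (h : CM f) : Antitone f := by
  refine antitone_nat_of_succ_le fun n => ?_
  have := h.nD.pos n
  simp only [_root_.nD] at this
  linarith

lemma CM_inv (a b : ℝ) (ha : 0 < a) (hb : 0 ≤ b) :
    CM (fun i : ℕ => (a * ((i + 1 : ℕ) : ℝ) + b)⁻¹) := by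
  intro n
  have hp : ∀ i : ℕ, 0 < a * ((i + 1 : ℕ) : ℝ) + b := fun i => by positivity
  induction n with
  | zero => intro i; exact inv_pos.2 (hp i)
  | succ n ih =>
    refine ⟨fun i => inv_pos.2 (hp i), ?_⟩
    have : nD (fun i : ℕ => (a * ((i + 1 : ℕ) : ℝ) + b)⁻¹) =
        fun i : ℕ => a * ((a * ((i + 1 : ℕ) : ℝ) + b)⁻¹ *
          (a * ((i + 1 + 1 : ℕ) : ℝ) + b)⁻¹) := by
      funext i
      have h1 := (hp i).ne'
      have h2 := (hp (i + 1)).ne'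
      simp only [nD]
      field_simp
      push_cast
      ring
    rw [this]
    exact (ih.mul ih.shift).smul ha

lemma CM.pow {f : ℕ → ℝ} (h : CM f) (k : ℕ) : CM (fun i => f i ^ (k + 1)) := by
  induction k with
  | zero => simpa using h
  | succ k ih => simpa only [pow_succ _ (k + 1)] using ih.mul h

lemma CM_tail {q u : ℕ → ℝ} (hu : CM u) (hq : Tendsto q atTop (nhds 0))
    (h : ∀ i, q i - q (i + 1) = u i) : CM q := by
  have hanti : Antitone q := antitone_nat_of_succ_le fun n => by
    have := h n; have := hu.pos n; linarith
  have hpos : ∀ i, 0 < q i := fun i => by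
    have h1 := hanti.le_of_tendsto hq (i + 1)
    have := h i; have := hu.pos i; linarith
  intro n
  cases n with
  | zero => exact hpos
  | succ n =>
    refine ⟨hpos, ?_⟩
    have : nD q = u := funext h
    rw [this]; exact hu n

lemma CM_alt (n : ℕ) : ∀ {q u : ℕ → ℝ}, CM u → Tendsto q atTop (nhds 0) →
    (∀ i, q i + q (i + 1) = u i) → PD n q := by
  have hpos : ∀ {q u : ℕ → ℝ}, CM u → Tendsto q atTop (nhds 0) →
      (∀ i, q i + q (i + 1) = u i) → ∀ i, 0 < q i := by
    intro q u hu hq h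
    have step : ∀ i, q (i + 2) < q i := fun i => by
      have h1 := h i
      have h2 := h (i + 1)
      have h3 := hu.nD.pos i
      simp only [nD] at h3
      have : q (i + 1 + 1) = q (i + 2) := rfl
      linarith
    have hnn : ∀ j, 0 ≤ q j := fun j => by
      have hanti : Antitone (fun k => q (j + 2 * k)) :=
        antitone_nat_of_succ_le fun k => (step (j + 2 * k)).le
      have ht : Tendsto (fun k => q (j + 2 * k)) atTop (nhds 0) := by
        refine hq.comp (tendsto_atTop_mono (fun k => ?_) tendsto_id)
        simp only [id]; omega
      simpa using hanti.le_of_tendsto ht 0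
    exact fun i => (hnn (i + 2)).trans_lt (step i)
  induction n with
  | zero => intro q u hu hq h; exact hpos hu hq h
  | succ n ih =>
    intro q u hu hq h
    refine ⟨hpos hu hq h, ih hu.nD ?_ ?_⟩
    · have := hq.sub (hq.comp (tendsto_add_atTop_nat 1))
      rw [sub_zero] at this
      exact this
    · intro i
      have := h i
      have := h (i + 1)
      simp only [nD]; linarith

lemma tendsto_C_div (C : ℝ) : Tendsto (fun i : ℕ => C / ((i : ℝ) + 1)) atTop (nhds 0) := by
  have := (tendsto_one_div_add_atTop_nhds_zero_nat (𝕜 := ℝ)).const_mul C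
  simpa [div_eq_mul_inv] using this

lemma exists_tail {σ : ℝ} {u : ℕ → ℝ} (hσ : σ = 1 ∨ σ = -1) (hu : CM u)
    (h1 : ∃ C : ℝ, ∀ i : ℕ, u i ≤ C / ((i : ℝ) + 1))
    (h2 : σ = 1 → ∃ C : ℝ, ∀ i : ℕ, u i ≤ C / ((i : ℝ) + 1) ^ 2) :
    ∃ q : ℕ → ℝ, CM q ∧ (∀ i, q i - σ * q (i + 1) = u i) ∧
      ∃ C : ℝ, ∀ i : ℕ, q i ≤ C / ((i : ℝ) + 1) := by
  have hsq : σ * σ = 1 := by rcases hσ with h | h <;> simp [h]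
  have hu0 : Tendsto u atTop (nhds 0) := by
    obtain ⟨C, hC⟩ := h1
    exact squeeze_zero (fun i => (hu.pos i).le) hC (tendsto_C_div C)
  have hl : ∃ l, Tendsto (fun n => ∑ i ∈ Finset.range n, σ ^ i * u i) atTop (nhds l) := by
    rcases hσ with h | h
    · obtain ⟨C, hC⟩ := h2 h
      have hs : Summable u := by
        refine Summable.of_nonneg_of_le (fun i => (hu.pos i).le) hC ?_
        have := (summable_nat_add_iff 1).2 (Real.summable_one_div_nat_pow.2 (by norm_num : 1 < 2))
        have := this.mul_left C
        simpa [mul_one_div, div_eq_mul_inv] using this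
      refine ⟨∑' i, u i, ?_⟩
      simpa [h] using hs.hasSum.tendsto_sum_nat
    · subst h
      exact hu.anti.tendsto_alternating_series_of_tendsto_zero hu0
  obtain ⟨l, hl⟩ := hl
  let q : ℕ → ℝ := fun j => σ ^ j * (l - ∑ i ∈ Finset.range j, σ ^ i * u i)
  have hqt : Tendsto q atTop (nhds 0) := by
    rw [tendsto_zero_iff_abs_tendsto_zero]
    have h3 : Tendsto (fun n => |l - ∑ i ∈ Finset.range n, σ ^ i * u i|) atTop (nhds 0) := by
      have := ((tendsto_const_nhds (x := l)).sub hl).abs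
      simpa using this
    refine h3.congr fun n => ?_
    have : |σ| = 1 := by rcases hσ with h | h <;> simp [h]
    simp [q, abs_mul, abs_pow, this]
  have hrec : ∀ i, q i - σ * q (i + 1) = u i := by
    intro i
    simp only [q, Finset.sum_range_succ]
    have h4 : σ ^ i * σ ^ i = 1 := by rw [← mul_pow, hsq, one_pow]
    have h5 : σ * σ ^ (i + 1) = σ ^ i := by rw [pow_succ]; linear_combination σ ^ i * hsq
    rw [← mul_assoc, h5]
    linear_combination u i * h4
  have hqCM : CM q := by
    rcases hσ with h | h
    · exact CM_tail hu hqt fun i => by have := hrec i; rw [h] at this; linarith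
    · exact fun n => CM_alt n hu hqt fun i => by have := hrec i; rw [h] at this; linarith
  refine ⟨q, hqCM, hrec, ?_⟩
  rcases hσ with h | h
  · obtain ⟨C, hC⟩ := h2 h
    refine ⟨2 * C, fun i => ?_⟩
    have hC0 : 0 < C := by
      have := (hu.pos 0).trans_le (hC 0)
      simpa using this
    have hmono : Monotone (fun i : ℕ => q i - 2 * C / ((i : ℝ) + 1)) := by
      refine monotone_nat_of_le_succ fun n => ?_
      have e := hrec n
      rw [h] at e
      have e2 := hC n
      have e3 : C / ((n : ℝ) + 1) ^ 2 ≤ 2 * C / ((n : ℝ) + 1) - 2 * C / (((n + 1 : ℕ) : ℝ) + 1) := by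
        have hn : (0 : ℝ) ≤ n := Nat.cast_nonneg n
        have : 2 * C / ((n : ℝ) + 1) - 2 * C / (((n + 1 : ℕ) : ℝ) + 1)
            = 2 * C / (((n : ℝ) + 1) * ((n : ℝ) + 2)) := by
          push_cast
          field_simp
          ring
        rw [this, div_le_div_iff₀ (by positivity) (by positivity)]
        nlinarith [mul_nonneg hC0.le hn, mul_nonneg (mul_nonneg hC0.le hn) hn]
      linarith
    have ht : Tendsto (fun i : ℕ => q i - 2 * C / ((i : ℝ) + 1)) atTop (nhds 0) := by
      simpa using hqt.sub (tendsto_C_div (2 * C))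
    have := hmono.ge_of_tendsto ht i
    linarith
  · obtain ⟨C, hC⟩ := h1
    refine ⟨C, fun i => le_trans ?_ (hC i)⟩
    have e := hrec i
    have := hqCM.pos (i + 1)
    rw [h] at e
    linarith

/-- The admissible index lists. -/
def Valid (t : List (ℕ × ℤ × ℤ)) : Prop := ∀ x ∈ t, 0 < x.1 ∧ 0 ≤ x.2.1 ∧ x.2.2 ≠ 0

/-- The weight of an entry, at the summation index `i + 1`. -/
noncomputable def wt (a : ℕ) (b c : ℤ) (i : ℕ) : ℝ :=
  ((a : ℝ) * ((i + 1 : ℕ) : ℝ) + (b : ℝ))⁻¹ ^ c.natAbs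

lemma cycH_succ (a : ℕ) (b c : ℤ) (t : List (ℕ × ℤ × ℤ)) (n : ℕ) :
    cycH ((a, b, c) :: t) (n + 1) = cycH ((a, b, c) :: t) n +
      (c.sign : ℝ) ^ (n + 1) * wt a b c n * cycH t (n + 1) := by
  simp only [cycH]
  rw [Finset.sum_Icc_succ_top (by omega)]
  simp [wt, div_eq_mul_inv]

lemma cycH_cons_zero (a : ℕ) (b c : ℤ) (t : List (ℕ × ℤ × ℤ)) :
    cycH ((a, b, c) :: t) 0 = 0 := by simp [cycH]

lemma cycH_eq (a : ℕ) (b c : ℤ) (t : List (ℕ × ℤ × ℤ)) (n : ℕ) :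
    cycH ((a, b, c) :: t) n = ∑ i ∈ Finset.range n,
      (c.sign : ℝ) ^ (i + 1) * wt a b c i * cycH t (i + 1) := by
  induction n with
  | zero => simp [cycH_cons_zero]
  | succ n ih => rw [cycH_succ, ih, Finset.sum_range_succ]

lemma wt_CM {a : ℕ} {b c : ℤ} (ha : 0 < a) (hb : 0 ≤ b) (hc : c ≠ 0) : CM (wt a b c) := by
  obtain ⟨k, hk⟩ := Nat.exists_eq_succ_of_ne_zero (Int.natAbs_ne_zero.2 hc)
  have := (CM_inv (a : ℝ) (b : ℝ) (by exact_mod_cast ha) (by exact_mod_cast hb)).pow k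
  unfold wt
  rw [hk]
  exact this

lemma wt_le {a : ℕ} {b c : ℤ} (ha : 0 < a) (hb : 0 ≤ b) (k : ℕ) (hk : k ≤ c.natAbs) (i : ℕ) :
    wt a b c i ≤ 1 / ((i : ℝ) + 1) ^ k := by
  have ha' : (1 : ℝ) ≤ a := by exact_mod_cast ha
  have hb' : (0 : ℝ) ≤ b := by exact_mod_cast hb
  have hi : (0 : ℝ) ≤ i := Nat.cast_nonneg i
  have h1 : (i : ℝ) + 1 ≤ (a : ℝ) * ((i + 1 : ℕ) : ℝ) + (b : ℝ) := by
    push_cast; nlinarith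
  unfold wt
  rw [inv_pow, one_div]
  apply inv_anti₀ (by positivity)
  calc ((i : ℝ) + 1) ^ k ≤ ((i : ℝ) + 1) ^ c.natAbs := pow_le_pow_right₀ (by linarith) hk
    _ ≤ _ := pow_le_pow_left₀ (by linarith) h1 _

lemma sign_cases {c : ℤ} (hc : c ≠ 0) : (c.sign : ℝ) = 1 ∨ (c.sign : ℝ) = -1 := by
  rcases lt_or_gt_of_ne hc with h | h
  · right; rw [Int.sign_eq_neg_one_of_neg h]; simp
  · left; rw [Int.sign_eq_one_of_pos h]; simp

lemma cycH_growth (t : List (ℕ × ℤ × ℤ)) (ht : Valid t) :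
    Tendsto (fun n : ℕ => (n : ℝ)⁻¹ * cycH t n) atTop (nhds 0) := by
  induction t with
  | nil => simpa [cycH] using tendsto_inv_atTop_nhds_zero_nat (𝕜 := ℝ)
  | cons x t ih =>
    obtain ⟨a, b, c⟩ := x
    have hx := ht (a, b, c) (by simp)
    obtain ⟨ha, hb, hc⟩ := hx
    simp only at ha hb hc
    have ih' := ih fun y hy => ht y (by simp [hy])
    have h1 : Tendsto (fun i : ℕ => (c.sign : ℝ) ^ (i + 1) * wt a b c i * cycH t (i + 1))
        atTop (nhds 0) := by
      have h2 := (ih'.comp (tendsto_add_atTop_nat 1)).abs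
      rw [abs_zero] at h2
      refine squeeze_zero_norm (fun i => ?_) h2
      have hs : |(c.sign : ℝ)| = 1 := by rcases sign_cases hc with h | h <;> simp [h]
      have hw := wt_le (c := c) ha hb 1 (Int.natAbs_pos.2 hc) i
      have hwp := (wt_CM ha hb hc).pos i
      rw [Real.norm_eq_abs, abs_mul, abs_mul, abs_pow, hs, one_pow, one_mul, abs_of_pos hwp]
      simp only [Function.comp_apply]
      rw [abs_mul]
      gcongr
      rw [abs_of_nonneg (by positivity)]
      simpa using hw
    have := h1.cesaro
    simpa only [← cycH_eq] using this

lemma abel {σ : ℝ} {q u S : ℕ → ℝ} (h : ∀ i, q i - σ * q (i + 1) = u i) (h0 : S 0 = 0) (n : ℕ) :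
    ∑ i ∈ Finset.range n, σ ^ i * u i * S (i + 1) =
      ∑ i ∈ Finset.range n, σ ^ i * q i * (S (i + 1) - S i) - σ ^ n * q n * S n := by
  induction n with
  | zero => simp [h0]
  | succ n ih =>
    rw [Finset.sum_range_succ, Finset.sum_range_succ, ih, ← h n]
    ring

lemma key (t : List (ℕ × ℤ × ℤ)) : Valid t → ∀ (σ : ℝ) (u : ℕ → ℝ), (σ = 1 ∨ σ = -1) → CM u →
    (∃ C : ℝ, ∀ i : ℕ, u i ≤ C / ((i : ℝ) + 1)) →
    (σ = 1 → ∃ C : ℝ, ∀ i : ℕ, u i ≤ C / ((i : ℝ) + 1) ^ 2) →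
    ∃ L : ℝ, L ≠ 0 ∧ Tendsto (fun n => ∑ i ∈ Finset.range n, σ ^ i * u i * cycH t (i + 1))
      atTop (nhds L) := by
  induction t with
  | nil =>
    intro _ σ u hσ hu h1 h2
    obtain ⟨q, hq, hrec, C, hC⟩ := exists_tail hσ hu h1 h2
    refine ⟨q 0, (hq.pos 0).ne', ?_⟩
    have hsum : ∀ n, ∑ i ∈ Finset.range n, σ ^ i * u i * cycH [] (i + 1) = q 0 - σ ^ n * q n := by
      intro n
      induction n with
      | zero => simp
      | succ n ih =>
        rw [Finset.sum_range_succ, ih, ← hrec n]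
        simp only [cycH]
        ring
    simp only [hsum]
    have hz : Tendsto (fun n => σ ^ n * q n) atTop (nhds 0) := by
      refine squeeze_zero_norm (fun i => ?_) (tendsto_C_div C)
      have hs : |σ| = 1 := by rcases hσ with h | h <;> simp [h]
      rw [Real.norm_eq_abs, abs_mul, abs_pow, hs, one_pow, one_mul, abs_of_pos (hq.pos i)]
      exact hC i
    simpa using (tendsto_const_nhds (x := q 0)).sub hz
  | cons x t ih =>
    intro ht σ u hσ hu h1 h2
    have hgrow := cycH_growth _ ht
    obtain ⟨a, b, c⟩ := x
    have hx := ht (a, b, c) (by simp)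
    obtain ⟨ha, hb, hc⟩ := hx
    simp only at ha hb hc
    obtain ⟨q, hq, hrec, C, hC⟩ := exists_tail hσ hu h1 h2
    have hC0 : 0 < C := by
      have := (hq.pos 0).trans_le (hC 0)
      simpa using this
    have hw := wt_CM ha hb hc
    have hu' : ∀ i : ℕ, q i * wt a b c i ≤ C / ((i : ℝ) + 1) ^ 2 := by
      intro i
      have h3 := wt_le (c := c) ha hb 1 (Int.natAbs_pos.2 hc) i
      calc q i * wt a b c i ≤ C / ((i : ℝ) + 1) * (1 / ((i : ℝ) + 1) ^ 1) :=
            mul_le_mul (hC i) h3 (hw.pos i).le (by positivity)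
        _ = _ := by field_simp
    have hs := sign_cases hc
    obtain ⟨L, hL, hlim⟩ := ih (fun y hy => ht y (by simp [hy])) (σ * (c.sign : ℝ))
      (fun i => q i * wt a b c i)
      (by rcases hσ with h | h <;> rcases hs with h' | h' <;> simp [h, h'])
      (hq.mul hw)
      ⟨C, fun i => (hu' i).trans (by
        have hi : (0 : ℝ) ≤ i := Nat.cast_nonneg i
        apply div_le_div_of_nonneg_left hC0.le (by positivity)
        nlinarith)⟩ (fun _ => ⟨C, hu'⟩)
    refine ⟨(c.sign : ℝ) * L, mul_ne_zero (by rcases hs with h' | h' <;> simp [h']) hL, ?_⟩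
    have hz : Tendsto (fun n => σ ^ n * q n * cycH ((a, b, c) :: t) n) atTop (nhds 0) := by
      have hg := (hgrow.abs).const_mul C
      rw [abs_zero, mul_zero] at hg
      refine squeeze_zero_norm (fun i => ?_) hg
      have hs : |σ| = 1 := by rcases hσ with h | h <;> simp [h]
      rw [Real.norm_eq_abs, abs_mul, abs_mul, abs_pow, hs, one_pow, one_mul, abs_of_pos (hq.pos i)]
      rcases Nat.eq_zero_or_pos i with h0 | h0
      · subst h0; simp [cycH_cons_zero]
      · have hi : (0 : ℝ) < i := by exact_mod_cast h0
        rw [abs_mul, ← mul_assoc, abs_of_pos (inv_pos.2 hi)]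
        gcongr
        refine (hC i).trans ?_
        rw [← div_eq_mul_inv]
        apply div_le_div_of_nonneg_left hC0.le hi
        linarith
    have := (hlim.const_mul (c.sign : ℝ)).sub hz
    rw [sub_zero] at this
    refine this.congr fun n => ?_
    rw [abel hrec (cycH_cons_zero a b c t) n, Finset.mul_sum]
    congr 1
    refine Finset.sum_congr rfl fun i _ => ?_
    rw [cycH_succ, mul_pow]
    ring

lemma cycH_conv {a : ℕ} {b c : ℤ} {t : List (ℕ × ℤ × ℤ)} (ht : Valid ((a, b, c) :: t))
    (h1 : c ≠ 1) : ∃ L : ℝ, L ≠ 0 ∧ Tendsto (cycH ((a, b, c) :: t)) atTop (nhds L) := by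
  obtain ⟨ha, hb, hc⟩ := ht (a, b, c) (by simp)
  simp only at ha hb hc
  have hs := sign_cases hc
  obtain ⟨L, hL, hlim⟩ := key t (fun y hy => ht y (by simp [hy])) (c.sign : ℝ) (wt a b c) hs
    (wt_CM ha hb hc)
    ⟨1, fun i => by simpa using wt_le (c := c) ha hb 1 (Int.natAbs_pos.2 hc) i⟩
    (fun h => ⟨1, fun i => wt_le (c := c) ha hb 2 (by
      have h' : c.sign = 1 := by exact_mod_cast h
      have := Int.sign_eq_one_iff_pos.1 h'
      omega) i⟩)
  refine ⟨(c.sign : ℝ) * L, mul_ne_zero (by rcases hs with h' | h' <;> simp [h']) hL, ?_⟩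
  refine (hlim.const_mul (c.sign : ℝ)).congr fun n => ?_
  rw [cycH_eq, Finset.mul_sum]
  refine Finset.sum_congr rfl fun i _ => ?_
  ring

lemma cycH_div {a : ℕ} {b : ℤ} {t : List (ℕ × ℤ × ℤ)} (ha : 0 < a) (hb : 0 ≤ b)
    {s ε : ℝ} (hε : 0 < ε) (h : ∀ᶠ n in atTop, ε ≤ s * cycH t n) :
    Tendsto (fun n => s * cycH ((a, b, 1) :: t) n) atTop atTop := by
  obtain ⟨N, hN⟩ := eventually_atTop.1 h
  have ha' : (0 : ℝ) < a := by exact_mod_cast ha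
  have hb' : (0 : ℝ) ≤ b := by exact_mod_cast hb
  have hk : 0 < ε / (a + b) := by positivity
  have hH := (Real.tendsto_sum_range_one_div_nat_succ_atTop.const_mul_atTop hk)
  have hH2 := tendsto_atTop_add_const_right atTop
    (s * cycH ((a, b, 1) :: t) N - ε / (a + b) * ∑ i ∈ Finset.range N, 1 / ((i : ℝ) + 1)) hH
  refine tendsto_atTop_mono' _ ?_ hH2
  filter_upwards [eventually_ge_atTop N] with n hn
  induction n, hn using Nat.le_induction with
  | base => linarith
  | succ n hn ih =>
    rw [cycH_succ, Finset.sum_range_succ]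
    have h1 := hN (n + 1) (by omega)
    have h2 : ε / (a + b) * (1 / ((n : ℝ) + 1)) ≤ wt a b 1 n * (s * cycH t (n + 1)) := by
      calc ε / (a + b) * (1 / ((n : ℝ) + 1)) = 1 / ((a + b) * ((n : ℝ) + 1)) * ε := by
            field_simp
        _ ≤ wt a b 1 n * (s * cycH t (n + 1)) := by
            have hw : 1 / ((a + b) * ((n : ℝ) + 1)) ≤ wt a b 1 n := by
              have hn0 : (0 : ℝ) ≤ n := Nat.cast_nonneg n
              simp only [wt, Int.natAbs_one, pow_one]
              rw [one_div]
              apply inv_anti₀ (by positivity)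
              push_cast
              nlinarith [mul_nonneg hb' hn0]
            apply mul_le_mul hw h1 hε.le
            exact le_trans (by positivity) hw
    simp only [Int.sign_one, Int.cast_one, one_pow, one_mul]
    have h3 : s * (wt a b 1 n * cycH t (n + 1)) = wt a b 1 n * (s * cycH t (n + 1)) := by ring
    rw [mul_add, mul_add, h3]
    linarith

lemma cycH_away (t : List (ℕ × ℤ × ℤ)) (ht : Valid t) :
    ∃ s ε : ℝ, 0 < ε ∧ ∀ᶠ n in atTop, ε ≤ s * cycH t n := by
  induction t with
  | nil => exact ⟨1, 1, one_pos, by simp [cycH]⟩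
  | cons x t ih =>
    obtain ⟨a, b, c⟩ := x
    by_cases hc : c = 1
    · subst hc
      obtain ⟨s, ε, hε, h⟩ := ih fun y hy => ht y (by simp [hy])
      obtain ⟨ha, hb, -⟩ := ht (a, b, 1) (by simp)
      exact ⟨s, 1, one_pos, (cycH_div ha hb hε h).eventually_ge_atTop 1⟩
    · obtain ⟨L, hL, hlim⟩ := cycH_conv ht hc
      have h2 := hlim.const_mul L
      have hLL : 0 < L * L := mul_self_pos.2 hL
      exact ⟨L, L * L / 2, by positivity, h2.eventually_const_le (by linarith)⟩

lemma cycH_iff {a : ℕ} {b c : ℤ} {t : List (ℕ × ℤ × ℤ)} (ht : Valid ((a, b, c) :: t)) :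
    (∃ L : ℝ, Tendsto (fun n => cycH ((a, b, c) :: t) n) atTop (nhds L)) ↔ c ≠ 1 := by
  constructor
  · rintro ⟨L, hL⟩ hc
    subst hc
    obtain ⟨s, ε, hε, h⟩ := cycH_away t fun y hy => ht y (by simp [hy])
    obtain ⟨ha, hb, -⟩ := ht (a, b, 1) (by simp)
    exact not_tendsto_nhds_of_tendsto_atTop (cycH_div ha hb hε h) _ (hL.const_mul s)
  · intro hc
    obtain ⟨L, -, hL⟩ := cycH_conv ht hc
    exact ⟨L, hL⟩

/-- Convergence criterion for cyclotomic harmonic sums of depth `p + 1 ≥ 1`: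
`S_{(a₀,b₀,c₀),…,(a_p,b_p,c_p)}(n)` converges as `n → ∞` iff `c₀ ≠ 1`. -/
theorem cycH_convergence_criterion (p : ℕ)
    (a b : Fin (p + 1) → ℕ) (c : Fin (p + 1) → ℤ)
    (ha : ∀ i, 0 < a i) (hc : ∀ i, c i ≠ 0) :
    (∃ L : ℝ, Tendsto (fun n => cycH (List.ofFn fun i => (a i, (b i : ℤ), c i)) n)
        atTop (nhds L)) ↔ c 0 ≠ 1 := by
  have hv : Valid (List.ofFn fun i => (a i, (b i : ℤ), c i)) := by
    intro x hx
    rw [List.mem_ofFn] at hx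
    obtain ⟨i, rfl⟩ := hx
    exact ⟨ha i, by simp, hc i⟩
  rw [List.ofFn_succ] at hv ⊢
  exact cycH_iff hv
end

section
/- Summation of a power times a monomial against a cyclotomic S-sum: let k ∈ ℕ, n ∈ ℕ, m ≥ 1, let a_1,…,a_m, c_1,…,c_m be positive integers, b_1,…,b_m nonnegative integers, and x, x_1,…,x_m nonzero reals. Then Σ_{i=1}^n x^i i^k · S_{(a_1,b_1,c_1),…,(a_m,b_m,c_m)}(x_1,…,x_m; i) = S_{(a_1,b_1,c_1),…,(a_m,b_m,c_m)}(x_1,…,x_m; n) · Σ_{i=1}^n x^i i^k − Σ_{j=1}^n ( x_1^j · S_{(a_2,b_2,c_2),…,(a_m,b_m,c_m)}(x_2,…,x_m; j) / (a_1 j + b_1)^{c_1} ) · Σ_{i=1}^{j−1} x^i i^k. -/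
/-- Summation of `x^i i^k` against a cyclotomic S-sum of depth `≥ 1`. -/
theorem cycS_sum_power_monomial (k n : ℕ) (a₁ c₁ b₁ : ℕ) (x x₁ : ℝ)
    (t : List ((ℕ × ℤ × ℕ) × ℝ))
    (ha₁ : 0 < a₁) (hc₁ : 0 < c₁) (hx : x ≠ 0) (hx₁ : x₁ ≠ 0)
    (ht : ∀ p ∈ t, 0 < p.1.1 ∧ 0 ≤ p.1.2.1 ∧ 0 < p.1.2.2 ∧ p.2 ≠ 0) :
    ∑ i ∈ Finset.Icc 1 n,
        x ^ i * (i : ℝ) ^ k * cycS (((a₁, (b₁ : ℤ), c₁), x₁) :: t) i =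
      cycS (((a₁, (b₁ : ℤ), c₁), x₁) :: t) n *
          (∑ i ∈ Finset.Icc 1 n, x ^ i * (i : ℝ) ^ k)
        - ∑ j ∈ Finset.Icc 1 n,
            x₁ ^ j * cycS t j / ((a₁ : ℝ) * j + (b₁ : ℝ)) ^ c₁ *
              ∑ i ∈ Finset.Icc 1 (j - 1), x ^ i * (i : ℝ) ^ k := by
  induction n with
  | zero => simp
  | succ n ih =>
    have hS : cycS (((a₁, (b₁ : ℤ), c₁), x₁) :: t) (n + 1) =
        cycS (((a₁, (b₁ : ℤ), c₁), x₁) :: t) n +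
          x₁ ^ (n + 1) * cycS t (n + 1) /
            ((a₁ : ℝ) * ((n + 1 : ℕ) : ℝ) + (b₁ : ℝ)) ^ c₁ := by
      simp only [cycS]
      rw [Finset.sum_Icc_succ_top (by omega)]
      rw [Int.cast_natCast, mul_div_right_comm]
    rw [Finset.sum_Icc_succ_top (by omega), Finset.sum_Icc_succ_top (by omega),
      Finset.sum_Icc_succ_top (by omega), ih, hS, Nat.add_sub_cancel]
    ring
end

section
/- Integral representation of depth-one cyclotomic S-sums: let a, c be positive integers, b a nonnegative integer, d a nonzero real, and n ∈ ℕ. Define G_1(u) = ∫_0^u x^{a+b−1} (d^n x^{a n} − 1)/(x^a − 1/d) dx for u ∈ [0,1], and G_{j+1}(u) = ∫_0^u G_j(x)/x dx for 1 ≤ j < c. Then G_c(1) = S_{(a,b,c)}(d; n) = Σ_{i=1}^n d^i/(a i + b)^c. -/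
/-- `GFun a b n d j` is the iterated integral `G_{j+1}` of the statement:
`G_1(u) = ∫_0^u x^{a+b−1}(d^n x^{an} − 1)/(x^a − 1/d) dx` and
`G_{j+1}(u) = ∫_0^u G_j(x)/x dx`. -/
noncomputable def GFun (a b n : ℕ) (d : ℝ) : ℕ → ℝ → ℝ
  | 0, u => ∫ x in (0 : ℝ)..u,
      x ^ (a + b - 1) * (d ^ n * x ^ (a * n) - 1) / (x ^ a - 1 / d)
  | j + 1, u => ∫ x in (0 : ℝ)..u, GFun a b n d j x / x

theorem integral_aux (a b n j : ℕ) (d : ℝ) (ha : 0 < a) (F : ℝ → ℝ) (S : Set ℝ) (hS : S.Finite)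
    (hF : ∀ x, x ∉ S → F x = ∑ i ∈ Finset.Icc 1 n,
      d ^ i / ((a : ℝ) * i + (b : ℝ)) ^ j * x ^ (a * i + b - 1)) (u : ℝ) :
    ∫ x in (0 : ℝ)..u, F x = ∑ i ∈ Finset.Icc 1 n,
      d ^ i / ((a : ℝ) * i + (b : ℝ)) ^ (j + 1) * u ^ (a * i + b) := by
  have hae : ∀ᵐ x : ℝ, x ∉ S := by
    have := hS.measure_zero MeasureTheory.volume
    exact MeasureTheory.measure_eq_zero_iff_ae_notMem.mp this
  rw [intervalIntegral.integral_congr_ae (g := fun x => ∑ i ∈ Finset.Icc 1 n,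
      d ^ i / ((a : ℝ) * i + (b : ℝ)) ^ j * x ^ (a * i + b - 1))
      (hae.mono fun x hx _ => hF x hx)]
  rw [intervalIntegral.integral_finsetSum]
  · refine Finset.sum_congr rfl fun i hi => ?_
    have hi1 : 1 ≤ i := (Finset.mem_Icc.mp hi).1
    have hm : 0 < a * i + b := by positivity
    obtain ⟨m, hm'⟩ : ∃ m, a * i + b = m + 1 := ⟨a * i + b - 1, by omega⟩
    have hc : (a : ℝ) * i + b = m + 1 := by exact_mod_cast hm'
    rw [intervalIntegral.integral_const_mul, hm', Nat.add_sub_cancel, integral_pow, hc]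
    have : (m : ℝ) + 1 ≠ 0 := by positivity
    field_simp
    simp
    ring
  · intro i _
    exact Continuous.intervalIntegrable (by fun_prop) _ _

theorem GFun_eq (a b n : ℕ) (d : ℝ) (ha : 0 < a) (hd : d ≠ 0) (j : ℕ) : ∀ u : ℝ,
    GFun a b n d j u = ∑ i ∈ Finset.Icc 1 n,
      d ^ i / ((a : ℝ) * i + (b : ℝ)) ^ (j + 1) * u ^ (a * i + b) := by
  induction j with
  | zero =>
    intro u
    rw [GFun]
    refine integral_aux a b n 0 d ha _ {x | x ^ a = 1 / d} ?_ ?_ u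
    · refine (Polynomial.nthRoots a (1 / d)).toFinset.finite_toSet.subset ?_
      intro x hx
      simpa [Polynomial.mem_nthRoots ha] using hx
    · intro x hx
      have hx' : x ^ a - 1 / d ≠ 0 := sub_ne_zero.mpr hx
      rw [div_eq_iff hx']
      have hg := geom_sum_mul (d * x ^ a) n
      have h1 : d * x ^ a - 1 = d * (x ^ a - 1 / d) := by field_simp
      rw [h1, mul_pow, ← pow_mul] at hg
      rw [← hg, ← Finset.Ico_succ_right_eq_Icc, Finset.sum_Ico_eq_sum_range, Finset.sum_mul,
        Finset.sum_mul, Finset.mul_sum]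
      refine Finset.sum_congr (by simp) fun i _ => ?_
      have : a * (1 + i) + b - 1 = (a + b - 1) + a * i := by
        rw [mul_add]; omega
      rw [this, mul_pow, ← pow_mul]
      ring
  | succ j ih =>
    intro u
    rw [GFun]
    refine integral_aux a b n (j + 1) d ha _ {0} (Set.finite_singleton 0) ?_ u
    intro x hx
    have hx0 : x ≠ 0 := hx
    rw [ih, Finset.sum_div]
    refine Finset.sum_congr rfl fun i hi => ?_
    have hi1 : 1 ≤ i := (Finset.mem_Icc.mp hi).1
    have hm : 0 < a * i + b := by positivity
    obtain ⟨m, hm'⟩ : ∃ m, a * i + b = m + 1 := ⟨a * i + b - 1, by omega⟩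
    rw [hm', Nat.add_sub_cancel, pow_succ x, mul_div_assoc, mul_div_cancel_right₀ _ hx0]

/-- Integral representation of depth-one cyclotomic S-sums:
`G_c(1) = S_{(a,b,c)}(d; n) = Σ_{i=1}^n d^i/(a i + b)^c`. -/
theorem cycS_depth_one_integral_rep (a c b n : ℕ) (d : ℝ)
    (ha : 0 < a) (hc : 0 < c) (hd : d ≠ 0) :
    GFun a b n d (c - 1) 1 = cycS [((a, (b : ℤ), c), d)] n ∧
    cycS [((a, (b : ℤ), c), d)] n =
      ∑ i ∈ Finset.Icc 1 n, d ^ i / ((a : ℝ) * i + (b : ℝ)) ^ c := by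
  have h2 : cycS [((a, (b : ℤ), c), d)] n =
      ∑ i ∈ Finset.Icc 1 n, d ^ i / ((a : ℝ) * i + (b : ℝ)) ^ c := by
    simp [cycS]
  refine ⟨?_, h2⟩
  rw [h2, GFun_eq a b n d ha hd, Nat.sub_add_cancel hc]
  simp
end
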